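/- arXiv:2501.13980 — 4 statements merged into one kernel-verified Lean document; each statement's English description precedes it below -/
import Mathlib

section
/- For every integer n ≥ 8 there exists a 4-connected locally nonforesty graph of order n whose size equals h(n), where h(n) = 2n if n ≡ 0 (mod 4) and h(n) = 2n + 1 otherwise. Consequently, the minimum size of a 4-connected locally nonforesty graph of order n is exactly h(n). -/
/-- A graph `G` is locally nonforesty if for every vertex `v`, the subgraph induced by
the neighborhood of `v` contains a cycle (i.e., is not acyclic). -/
def LocallyNonforesty {V : Type*} (G : SimpleGraph V) : Prop :=
  ∀ v : V, ¬ (G.induce (G.neighborSet v)).IsAcyclic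

/-- A graph is `k`-connected if it has more than `k` vertices and deleting any set of
fewer than `k` vertices leaves a connected graph. -/
def KConnected {V : Type*} [Fintype V] (G : SimpleGraph V) (k : ℕ) : Prop :=
  k < Fintype.card V ∧
    ∀ S : Finset V, S.card < k → (G.induce ((↑S : Set V)ᶜ)).Connected

def Cut {V : Type*} (G : SimpleGraph V) : Prop :=
  ∀ S : Finset V, S.card < 4 → ∀ χ : V → Bool,
    (∀ x y, x ∉ S → y ∉ S → G.Adj x y → χ x = χ y) → ∀ x y, x ∉ S → y ∉ S → χ x = χ y

theorem cut_of_kconn {V : Type*} [Fintype V] {G : SimpleGraph V} (h : KConnected G 4) : Cut G := by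
  intro S hS χ hχ x y hx hy
  have hc := (h.2 S hS).preconnected ⟨x, by simpa using hx⟩ ⟨y, by simpa using hy⟩
  obtain ⟨p⟩ := hc
  have : ∀ (u v : ((↑S : Set V)ᶜ : Set V)), (G.induce ((↑S : Set V)ᶜ)).Walk u v → χ u = χ v := by
    intro u v p
    induction p with
    | nil => rfl
    | @cons u v w hadj _ ih =>
      rw [← ih]
      exact hχ _ _ (fun h => u.2 h) (fun h => v.2 h) (by simpa using hadj)
  exact this _ _ p

open Classical in
theorem kconn_of_cut {V : Type*} [Fintype V] {G : SimpleGraph V} (h : Cut G)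
    (hc : 4 < Fintype.card V) : KConnected G 4 := by
  refine ⟨hc, fun S hS => ?_⟩
  have hne : ∃ x, x ∉ S := by
    by_contra! hh
    have := Finset.card_le_card (fun x _ => hh x : (Finset.univ : Finset V) ⊆ S)
    rw [Finset.card_univ] at this
    omega
  obtain ⟨x0, hx0⟩ := hne
  have : Nonempty ((↑S : Set V)ᶜ : Set V) := ⟨⟨x0, by simpa using hx0⟩⟩
  refine ⟨fun x y => ?_⟩
  have hx : x.1 ∉ S := fun h => x.2 h
  have hy : y.1 ∉ S := fun h => y.2 h
  have key := h S hS (fun w => decide (∃ hw : w ∈ ((↑S : Set V)ᶜ : Set V),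
    (G.induce ((↑S : Set V)ᶜ)).Reachable x ⟨w, hw⟩)) (by
      intro u v hu hv huv
      have e : (G.induce ((↑S : Set V)ᶜ)).Adj ⟨u, by simpa using hu⟩ ⟨v, by simpa using hv⟩ := by
        simpa using huv
      have e2 := e.symm
      simp only [decide_eq_decide]
      constructor
      · rintro ⟨_, hr⟩
        exact ⟨_, hr.trans e.reachable⟩
      · rintro ⟨_, hr⟩
        exact ⟨_, hr.trans e2.reachable⟩) x.1 y.1 hx hy
  simp only [decide_eq_decide] at key
  obtain ⟨_, hr⟩ := key.1 ⟨x.2, SimpleGraph.Reachable.refl _⟩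
  exact hr

open Classical in
theorem cycle_set {V : Type*} [Fintype V] (G : SimpleGraph V) (v : V)
    (h : ¬ (G.induce (G.neighborSet v)).IsAcyclic) :
    ∃ T : Finset V, T.Nonempty ∧ (∀ x ∈ T, G.Adj v x) ∧
      ∀ x ∈ T, ∃ y ∈ T, ∃ z ∈ T, y ≠ z ∧ G.Adj x y ∧ G.Adj x z := by
  unfold SimpleGraph.IsAcyclic at h
  push Not at h
  obtain ⟨u, p, hp⟩ := h
  refine ⟨p.support.toFinset.image Subtype.val, ⟨u.1, ?_⟩, ?_, ?_⟩
  · exact Finset.mem_image_of_mem _ (by simp)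
  · intro x hx
    simp at hx
    exact hx.1
  · intro x hx
    simp only [Finset.mem_image, List.mem_toFinset] at hx
    obtain ⟨x, hx, rfl⟩ := hx
    have := hp.ncard_neighborSet_toSubgraph_eq_two hx
    obtain ⟨y, z, hyz, he⟩ := Set.ncard_eq_two.1 this
    have hy : p.toSubgraph.Adj x y := by
      have : y ∈ p.toSubgraph.neighborSet x := by rw [he]; simp
      exact this
    have hz : p.toSubgraph.Adj x z := by
      have : z ∈ p.toSubgraph.neighborSet x := by rw [he]; simp
      exact this
    have hy2 := p.mem_verts_toSubgraph.1 hy.snd_mem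
    have hz2 := p.mem_verts_toSubgraph.1 hz.snd_mem
    refine ⟨y.1, ?_, z.1, ?_, ?_, ?_, ?_⟩
    · exact Finset.mem_image_of_mem _ (by simpa using hy2)
    · exact Finset.mem_image_of_mem _ (by simpa using hz2)
    · exact fun h => hyz (Subtype.ext h)
    · simpa using hy.adj_sub
    · simpa using hz.adj_sub

theorem nonacyclic_of_triangle {V : Type*} (G : SimpleGraph V) (v x y z : V)
    (hx : G.Adj v x) (hy : G.Adj v y) (hz : G.Adj v z) (hxy : G.Adj x y) (hyz : G.Adj y z)
    (hxz : G.Adj x z) : ¬ (G.induce (G.neighborSet v)).IsAcyclic := by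
  intro h
  have h1 : (G.induce (G.neighborSet v)).Adj ⟨x, hx⟩ ⟨y, hy⟩ := by simpa using hxy
  have h2 : (G.induce (G.neighborSet v)).Adj ⟨y, hy⟩ ⟨z, hz⟩ := by simpa using hyz
  have h3 : (G.induce (G.neighborSet v)).Adj ⟨z, hz⟩ ⟨x, hx⟩ := by simpa using hxz.symm
  refine h (.cons h1 (.cons h2 (.cons h3 .nil))) ?_
  rw [SimpleGraph.Walk.isCycle_def, SimpleGraph.Walk.isTrail_def]
  have := hxy.ne; have := hyz.ne; have := hxz.ne
  refine ⟨?_, by simp, ?_⟩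
  · simp; grind
  · simp; grind

theorem cut_of_paths {V : Type*} (G : SimpleGraph V)
    (h : ∀ x y, x ≠ y → ¬ G.Adj x y → ∃ p m q : Fin 4 → V,
      (∀ i, G.Adj x (p i) ∧ (p i = m i ∨ G.Adj (p i) (m i)) ∧ (m i = q i ∨ G.Adj (m i) (q i)) ∧
        G.Adj (q i) y) ∧
      ∀ i j, i ≠ j → ∀ u, (u = p i ∨ u = m i ∨ u = q i) → ¬ (u = p j ∨ u = m j ∨ u = q j)) :
    Cut G := by
  intro S hS χ hχ x y hx hy
  by_cases hxy : x = y
  · rw [hxy]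
  by_cases ha : G.Adj x y
  · exact hχ x y hx hy ha
  obtain ⟨p, m, q, h1, h2⟩ := h x y hxy ha
  by_cases hall : ∃ i, p i ∉ S ∧ m i ∉ S ∧ q i ∉ S
  · obtain ⟨i, hp, hm, hq⟩ := hall
    obtain ⟨a1, a2, a3, a4⟩ := h1 i
    have e1 := hχ _ _ hx hp a1
    have e2 : χ (p i) = χ (m i) := a2.elim (fun h => by rw [h]) (hχ _ _ hp hm)
    have e3 : χ (m i) = χ (q i) := a3.elim (fun h => by rw [h]) (hχ _ _ hm hq)
    have e4 := hχ _ _ hq hy a4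
    rw [e1, e2, e3, e4]
  · exfalso
    have : ∀ i, ∃ u ∈ S, (u = p i ∨ u = m i ∨ u = q i) := by
      intro i
      by_contra hc
      apply hall
      exact ⟨i, fun h => hc ⟨_, h, by simp⟩, fun h => hc ⟨_, h, by simp⟩, fun h => hc ⟨_, h, by simp⟩⟩
    choose f hf hf2 using this
    have hinj : Function.Injective f := by
      intro i j hij
      by_contra hne
      exact h2 i j hne (f i) (hf2 i) (hij ▸ hf2 j)
    have := Finset.card_le_card_of_injOn (s := Finset.univ) (t := S) f (fun i _ => hf i) hinj.injOn
    simp at this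
    omega

/-- The two special edges `e 0 - e 2` and `e 1 - e 3`. -/
def Special {V : Type*} (e : Fin 4 → V) (x y : V) : Prop :=
  (x = e 0 ∧ y = e 2) ∨ (x = e 2 ∧ y = e 0) ∨ (x = e 1 ∧ y = e 3) ∨ (x = e 3 ∧ y = e 1)

/-- Adjacency after deleting the special edges. -/
def Rest {V : Type*} (G : SimpleGraph V) (e : Fin 4 → V) (x y : V) : Prop :=
  G.Adj x y ∧ ¬ Special e x y

open Classical in
/-- The inductive data of the construction. -/
def Good (n m : ℕ) : Prop :=
  ∃ (V : Type) (_ : Fintype V) (G : SimpleGraph V) (e : Fin 4 → V),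
    Fintype.card V = n ∧ Cut G ∧ Function.Injective e ∧ G.Adj (e 0) (e 2) ∧ G.Adj (e 1) (e 3) ∧
    (∀ v, ∃ x y z, Rest G e v x ∧ Rest G e v y ∧ Rest G e v z ∧
      Rest G e x y ∧ Rest G e y z ∧ Rest G e x z) ∧
    ∑ v, ∑ w, (if G.Adj v w then 1 else 0) = 2 * m

def madj (n : ℕ) (L : List ℕ) (x y : Fin n) : Bool := (L.getD x.1 0).testBit y.1

def mrest (n : ℕ) (L : List ℕ) (e : Fin 4 → Fin n) (x y : Fin n) : Bool :=
  madj n L x y && !((x = e 0 ∧ y = e 2) ∨ (x = e 2 ∧ y = e 0) ∨ (x = e 1 ∧ y = e 3) ∨ (x = e 3 ∧ y = e 1))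

def dig (n k c : ℕ) [NeZero n] : Fin n := Fin.ofNat n (c / 10 ^ k % 10)

theorem good_base (n m : ℕ) [NeZero n] (L : List ℕ) (T : List (List ℕ)) (e : Fin 4 → Fin n)
    (C : List ℕ)
    (hsymm : ∀ x y, madj n L x y = madj n L y x)
    (hirr : ∀ x, madj n L x x = false)
    (hT : ∀ x y : Fin n, x = y ∨ madj n L x y = true ∨
      let c := (T.getD x.1 []).getD y.1 0
      (∀ i : Fin 4, madj n L x (dig n (3 * i + 2) c) = true ∧
        (dig n (3 * i + 2) c = dig n (3 * i + 1) c ∨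
          madj n L (dig n (3 * i + 2) c) (dig n (3 * i + 1) c) = true) ∧
        (dig n (3 * i + 1) c = dig n (3 * i) c ∨
          madj n L (dig n (3 * i + 1) c) (dig n (3 * i) c) = true) ∧
        madj n L (dig n (3 * i) c) y = true) ∧
      ∀ i j : Fin 4, i ≠ j → ∀ u,
        (u = dig n (3 * i + 2) c ∨ u = dig n (3 * i + 1) c ∨ u = dig n (3 * i) c) →
        ¬ (u = dig n (3 * j + 2) c ∨ u = dig n (3 * j + 1) c ∨ u = dig n (3 * j) c))
    (hinj : ∀ i j, e i = e j → i = j)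
    (he : madj n L (e 0) (e 2) = true ∧ madj n L (e 1) (e 3) = true)
    (hC : ∀ v : Fin n, let c := C.getD v.1 0
      mrest n L e v (dig n 2 c) = true ∧ mrest n L e v (dig n 1 c) = true ∧
      mrest n L e v (dig n 0 c) = true ∧ mrest n L e (dig n 2 c) (dig n 1 c) = true ∧
      mrest n L e (dig n 1 c) (dig n 0 c) = true ∧ mrest n L e (dig n 2 c) (dig n 0 c) = true)
    (hsum : ∑ v : Fin n, ∑ w : Fin n, (if madj n L v w = true then 1 else 0) = 2 * m) :
    Good n m := by
  let G : SimpleGraph (Fin n) :=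
    { Adj := fun x y => madj n L x y = true
      symm := ⟨fun x y h => by rw [hsymm]; exact h⟩
      loopless := ⟨fun x h => by rw [hirr] at h; cases h⟩ }
  have hr : ∀ x y, mrest n L e x y = true → Rest G e x y := by
    intro x y h
    simp only [mrest, Bool.and_eq_true, Bool.not_eq_true', decide_eq_false_iff_not] at h
    exact h
  refine ⟨Fin n, inferInstance, G, e, by simp, ?_, hinj, he.1, he.2, ?_, ?_⟩
  · apply cut_of_paths
    intro x y hxy ha
    rcases hT x y with h | h | h
    · exact absurd h hxy
    · exact absurd h ha
    · exact ⟨_, _, _, h.1, h.2⟩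
  · intro v
    obtain ⟨h1, h2, h3, h4, h5, h6⟩ := hC v
    exact ⟨_, _, _, hr _ _ h1, hr _ _ h2, hr _ _ h3, hr _ _ h4, hr _ _ h5, hr _ _ h6⟩
  · rw [← hsum]
    exact Finset.sum_congr rfl fun v _ => Finset.sum_congr rfl fun w _ => by
      by_cases h : madj n L v w = true
      · rw [if_pos h, if_pos (show G.Adj v w from h)]
      · rw [if_neg h, if_neg (show ¬ G.Adj v w from h)]

theorem good6 : Good 6 13 := by
  apply good_base 6 13 [62, 61, 27, 39, 39, 27] 
    [[0, 0, 0, 0, 0, 0],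
      [0, 0, 0, 0, 0, 0],
      [0, 0, 0, 0, 0, 444333111000],
      [0, 0, 0, 0, 555222111000, 0],
      [0, 0, 0, 555222111000, 0, 0],
      [0, 0, 444333111000, 0, 0, 0]]
    ![2,3,4,5] [123, 23, 13, 12, 15, 14] <;> decide +kernel

theorem good7 : Good 7 15 := by
  apply good_base 7 15 [126, 29, 43, 71, 99, 85, 57] 
    [[0, 0, 0, 0, 0, 0, 0],
      [0, 0, 0, 0, 0, 336444222000, 225444333000],
      [0, 0, 0, 0, 336555111000, 0, 114555333000],
      [0, 0, 0, 0, 225666111000, 114666222000, 0],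
      [0, 0, 663555111000, 552666111000, 0, 0, 0],
      [0, 663444222000, 0, 441666222000, 0, 0, 0],
      [0, 552444333000, 441555333000, 0, 0, 0, 0]]
    ![2,3,5,6] [123, 23, 13, 12, 56, 46, 45] <;> decide +kernel

theorem good8 : Good 8 16 := by
  apply good_base 8 16 [30, 45, 75, 135, 225, 210, 180, 120] 
    [[0, 0, 0, 0, 0, 337226444111, 337115444222, 226115444333],
      [0, 0, 0, 0, 337226555000, 0, 337004555222, 226004555333],
      [0, 0, 0, 0, 337115666000, 337004666111, 0, 115004666333],
      [0, 0, 0, 0, 226115777000, 226004777111, 115004777222, 0],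
      [0, 773662555000, 773551666000, 662551777000, 0, 0, 0, 0],
      [773662444111, 0, 773440666111, 662440777111, 0, 0, 0, 0],
      [773551444222, 773440555222, 0, 551440777222, 0, 0, 0, 0],
      [662551444333, 662440555333, 551440666333, 0, 0, 0, 0, 0]]
    ![0,1,4,5] [123, 23, 13, 12, 567, 467, 457, 456] <;> decide +kernel

theorem good9 : Good 9 19 := by
  apply good_base 9 19 [60, 92, 155, 279, 15, 449, 418, 356, 232] 
    [[0, 556444333222, 0, 0, 0, 0, 441338227555, 416338555222, 416227555333],
      [665444333222, 0, 0, 0, 0, 440338227666, 0, 405338666222, 405227666333],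
      [0, 0, 0, 0, 0, 338116777000, 338005777111, 0, 116005777333],
      [0, 0, 0, 0, 0, 227116888000, 227005111888, 116005222888, 0],
      [0, 0, 0, 0, 0, 338227116000, 338227005111, 338116005222, 227116005333],
      [0, 883772004666, 883661777000, 772661888000, 883772661000, 0, 0, 0, 0],
      [883772114555, 0, 883550777111, 772550111888, 883772550111, 0, 0, 0, 0],
      [883614555222, 883504666222, 0, 661550222888, 883661550222, 0, 0, 0, 0],
      [772614555333, 772504666333, 661550777333, 0, 772661550333, 0, 0, 0, 0]]
    ![0,1,5,6] [234, 234, 34, 24, 23, 678, 578, 568, 567] <;> decide +kernel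

/-- Every vertex has a neighbour avoiding any three given vertices. -/
theorem exists_nbr {V : Type*} [Fintype V] {G : SimpleGraph V} (hG : Cut G)
    (hc : 4 < Fintype.card V) (v : V) (S : Finset V) (hS : S.card < 4) :
    ∃ w, G.Adj v w ∧ w ∉ S := by
  classical
  by_contra! hno
  have hS' : (S.erase v).card < 4 := lt_of_le_of_lt (Finset.card_erase_le) hS
  have hex : ∃ y, y ∉ insert v (S.erase v) := by
    by_contra! hh
    have := Finset.card_le_card (fun x _ => hh x : (Finset.univ : Finset V) ⊆ insert v (S.erase v))
    have h2 := Finset.card_insert_le v (S.erase v)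
    rw [Finset.card_univ] at this
    omega
  obtain ⟨y, hy⟩ := hex
  simp only [Finset.mem_insert, not_or] at hy
  have := hG (S.erase v) hS' (fun w => decide (w = v)) (by
    intro a b ha hb hab
    have := hab.ne
    simp only [decide_eq_decide]
    constructor
    · rintro rfl
      exact absurd (Finset.mem_erase.2 ⟨hab.ne.symm, hno _ hab⟩) hb
    · rintro rfl
      exact absurd (Finset.mem_erase.2 ⟨hab.ne, hno _ hab.symm⟩) ha) v y (by simp) hy.2
  simp [hy.1] at this

theorem mono_one {V : Type*} [Fintype V] {G : SimpleGraph V} (hG : Cut G)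
    (hc : 4 < Fintype.card V) (S : Finset V) (hS : S.card ≤ 2) (c a : V) (χ : V → Bool)
    (hχ : ∀ x y, x ∉ S → y ∉ S → G.Adj x y → ¬ (x = c ∧ y = a) → ¬ (x = a ∧ y = c) → χ x = χ y) :
    ∀ x y, x ∉ S → y ∉ S → χ x = χ y := by
  classical
  have h1 : (insert c S).card < 4 := by have := Finset.card_insert_le c S; omega
  have h2 : (insert a S).card < 4 := by have := Finset.card_insert_le a S; omega
  have key := hG (insert c S) h1 χ (by
    intro x y hx hy hxy
    simp only [Finset.mem_insert, not_or] at hx hy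
    exact hχ x y hx.2 hy.2 hxy (fun h => hx.1 h.1) (fun h => hy.1 h.2))
  simp only [Finset.mem_insert, not_or] at key
  obtain ⟨w, hw, hwS⟩ := exists_nbr hG hc c _ h2
  simp only [Finset.mem_insert, not_or] at hwS
  have hwc : w ≠ c := hw.ne.symm
  have hcc : ∀ x, x ∉ S → χ x = χ w := by
    intro x hx
    by_cases h : x = c
    · subst h
      exact hχ x w hx hwS.2 hw (fun h => hwS.1 h.2) (fun h => hwc h.2)
    · exact key x w ⟨h, hx⟩ ⟨hwc, hwS.2⟩
  intro x y hx hy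
  rw [hcc x hx, hcc y hy]

theorem mono_two {V : Type*} [Fintype V] {G : SimpleGraph V} (hG : Cut G)
    (hc : 4 < Fintype.card V) (S : Finset V) (hS : S.card ≤ 1) (e : Fin 4 → V)
    (he : Function.Injective e) (χ : V → Bool)
    (hχ : ∀ x y, x ∉ S → y ∉ S → Rest G e x y → χ x = χ y) :
    ∀ x y, x ∉ S → y ∉ S → χ x = χ y := by
  classical
  have ne : ∀ i j, i ≠ j → e i ≠ e j := fun i j h h' => h (he h')
  have h1 : (insert (e 1) S).card ≤ 2 := by have := Finset.card_insert_le (e 1) S; omega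
  have h2 : (insert (e 0) (insert (e 3) S)).card < 4 := by
    have := Finset.card_insert_le (e 3) S
    have := Finset.card_insert_le (e 0) (insert (e 3) S)
    omega
  have key := mono_one hG hc _ h1 (e 0) (e 2) χ (by
    intro x y hx hy hxy n1 n2
    simp only [Finset.mem_insert, not_or] at hx hy
    refine hχ x y hx.2 hy.2 ⟨hxy, ?_⟩
    unfold Special
    tauto)
  simp only [Finset.mem_insert, not_or] at key
  obtain ⟨w, hw, hwS⟩ := exists_nbr hG hc (e 1) _ h2
  simp only [Finset.mem_insert, not_or] at hwS
  have hwc : w ≠ e 1 := hw.ne.symm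
  have hcc : ∀ x, x ∉ S → χ x = χ w := by
    intro x hx
    by_cases h : x = e 1
    · subst h
      refine hχ _ w hx hwS.2.2 ⟨hw, ?_⟩
      unfold Special
      have := ne 1 0 (by decide)
      have := ne 1 2 (by decide)
      have := ne 1 3 (by decide)
      tauto
    · exact key x w ⟨h, hx⟩ ⟨hwc, hwS.2.2⟩
  intro x y hx hy
  rw [hcc x hx, hcc y hy]

/-- Insert a new `K₄` into the two special edges. -/
def ext {V : Type*} (G : SimpleGraph V) (e : Fin 4 → V) : SimpleGraph (V ⊕ Fin 4) where
  Adj u v := match u, v with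
    | .inl x, .inl y => Rest G e x y
    | .inl x, .inr j => x = e j
    | .inr i, .inl y => y = e i
    | .inr i, .inr j => i ≠ j
  symm := ⟨by
    rintro (x | i) (y | j) h
    · refine ⟨h.1.symm, fun h' => h.2 ?_⟩
      unfold Special at *
      tauto
    · exact h
    · exact h
    · exact h.symm⟩
  loopless := ⟨by
    rintro (x | i) h
    · exact h.1.ne rfl
    · exact h rfl⟩

theorem ext_cut {V : Type*} [Fintype V] {G : SimpleGraph V} (hG : Cut G)
    (hc : 4 < Fintype.card V) (e : Fin 4 → V)
    (he : Function.Injective e) : Cut (ext G e) := by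
  classical
  intro S hS χ hχ
  set A : Finset V := Finset.univ.filter (fun x => Sum.inl x ∈ S) with hA
  set B : Finset (Fin 4) := Finset.univ.filter (fun x => Sum.inr x ∈ S) with hB
  have mA : ∀ x, x ∉ A ↔ Sum.inl x ∉ S := by simp [hA]
  have mB : ∀ x, x ∉ B ↔ Sum.inr x ∉ S := by simp [hB]
  have hcard : A.card + B.card = S.card := by
    have : S = A.disjSum B := by
      ext (x | x) <;> simp [hA, hB]
    rw [this, Finset.card_disjSum]
  have cLL : ∀ x y, x ∉ A → y ∉ A → Rest G e x y → χ (.inl x) = χ (.inl y) :=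
    fun x y hx hy h => hχ _ _ ((mA x).1 hx) ((mA y).1 hy) h
  have cLR : ∀ i, e i ∉ A → i ∉ B → χ (.inl (e i)) = χ (.inr i) :=
    fun i hx hy => hχ _ _ ((mA _).1 hx) ((mB _).1 hy) (show e i = e i from rfl)
  have cRR : ∀ i j, i ∉ B → j ∉ B → χ (.inr i) = χ (.inr j) := by
    intro i j hi hj
    by_cases h : i = j
    · rw [h]
    · exact hχ _ _ ((mB _).1 hi) ((mB _).1 hj) h
  -- if both middle vertices survive, the special edge is harmless
  have cE : ∀ i j, i ∉ B → j ∉ B → e i ∉ A → e j ∉ A → χ (.inl (e i)) = χ (.inl (e j)) := by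
    intro i j hi hj hi' hj'
    rw [cLR i hi' hi, cLR j hj' hj, cRR i j hi hj]
  have mono : ∀ x y, x ∉ A → y ∉ A → χ (.inl x) = χ (.inl y) := by
    by_cases h02 : 0 ∉ B ∧ 2 ∉ B
    · by_cases h13 : 1 ∉ B ∧ 3 ∉ B
      · refine hG A (by omega) (fun x => χ (.inl x)) ?_
        intro x y hx hy hxy
        by_cases hs : Special e x y
        · rcases hs with ⟨rfl, rfl⟩ | ⟨rfl, rfl⟩ | ⟨rfl, rfl⟩ | ⟨rfl, rfl⟩
          · exact cE _ _ h02.1 h02.2 hx hy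
          · exact cE _ _ h02.2 h02.1 hx hy
          · exact cE _ _ h13.1 h13.2 hx hy
          · exact cE _ _ h13.2 h13.1 hx hy
        · exact cLL x y hx hy ⟨hxy, hs⟩
      · have hBpos : 1 ≤ B.card := by
          rw [Nat.one_le_iff_ne_zero, Finset.card_ne_zero]
          by_contra hne
          rw [Finset.not_nonempty_iff_eq_empty] at hne
          rw [hne] at h13
          simp at h13
        refine mono_one hG hc A (by omega) (e 1) (e 3) (fun x => χ (.inl x)) ?_
        intro x y hx hy hxy n1 n2
        by_cases hs : Special e x y
        · rcases hs with ⟨rfl, rfl⟩ | ⟨rfl, rfl⟩ | h | h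
          · exact cE _ _ h02.1 h02.2 hx hy
          · exact cE _ _ h02.2 h02.1 hx hy
          · exact absurd h n1
          · exact absurd h n2
        · exact cLL x y hx hy ⟨hxy, hs⟩
    · have hBpos : 1 ≤ B.card := by
        rw [Nat.one_le_iff_ne_zero, Finset.card_ne_zero]
        by_contra hne
        rw [Finset.not_nonempty_iff_eq_empty] at hne
        rw [hne] at h02
        simp at h02
      by_cases h13 : 1 ∉ B ∧ 3 ∉ B
      · refine mono_one hG hc A (by omega) (e 0) (e 2) (fun x => χ (.inl x)) ?_
        intro x y hx hy hxy n1 n2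
        by_cases hs : Special e x y
        · rcases hs with h | h | ⟨rfl, rfl⟩ | ⟨rfl, rfl⟩
          · exact absurd h n1
          · exact absurd h n2
          · exact cE _ _ h13.1 h13.2 hx hy
          · exact cE _ _ h13.2 h13.1 hx hy
        · exact cLL x y hx hy ⟨hxy, hs⟩
      · have hB2 : 2 ≤ B.card := by
          clear_value B
          clear * - h02 h13
          revert B
          decide
        exact mono_two hG hc A (by omega) e he (fun x => χ (.inl x)) cLL
  -- some surviving attachment
  have hatt : ∃ i, i ∉ B ∧ e i ∉ A := by
    by_contra! hno
    have h1 : (Finset.univ \ B).card ≤ A.card :=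
      Finset.card_le_card_of_injOn e (fun i hi => hno i (by simpa using hi)) he.injOn
    have h2 := Finset.le_card_sdiff B (Finset.univ : Finset (Fin 4))
    rw [Finset.card_univ, Fintype.card_fin] at h2
    omega
  obtain ⟨i, hi, hi'⟩ := hatt
  have fin : ∀ u, u ∉ S → χ u = χ (.inr i) := by
    rintro (x | j) hu
    · rw [mono x (e i) ((mA x).2 hu) hi', cLR i hi' hi]
    · exact cRR j i ((mB j).2 hu) hi
  intro x y hx hy
  rw [fin x hx, fin y hy]

theorem good_step {n m : ℕ} (hn : 4 < n) (h : Good n m) : Good (n + 4) (m + 8) := by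
  classical
  obtain ⟨V, _, G, e, hc, hcut, hinj, h02, h13, hK, hsum⟩ := h
  have ne : ∀ i j, i ≠ j → e i ≠ e j := fun i j h h' => h (hinj h')
  refine ⟨V ⊕ Fin 4, inferInstance, ext G e, ![.inl (e 0), .inl (e 1), .inr 0, .inr 1],
    by simp [hc], ext_cut hcut (by omega) e hinj, ?_, rfl, rfl, ?_, ?_⟩
  · have := ne 0 1 (by decide)
    intro i j
    fin_cases i <;> fin_cases j <;> simp [this, this.symm]
  · have hl : ∀ x y, Rest G e x y →
        Rest (ext G e) ![.inl (e 0), .inl (e 1), .inr 0, .inr 1] (.inl x) (.inl y) := by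
      intro x y h
      refine ⟨h, ?_⟩
      simp [Special]
    have hr : ∀ i j, i ≠ j →
        Rest (ext G e) ![.inl (e 0), .inl (e 1), .inr 0, .inr 1] (.inr i) (.inr j) := by
      intro x y h
      refine ⟨h, ?_⟩
      simp [Special]
    rintro (v | i)
    · obtain ⟨x, y, z, h1, h2, h3, h4, h5, h6⟩ := hK v
      exact ⟨_, _, _, hl _ _ h1, hl _ _ h2, hl _ _ h3, hl _ _ h4, hl _ _ h5, hl _ _ h6⟩
    · have : ∀ i : Fin 4, ∃ x y z, i ≠ x ∧ i ≠ y ∧ i ≠ z ∧ x ≠ y ∧ y ≠ z ∧ x ≠ z := by decide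
      obtain ⟨x, y, z, h1, h2, h3, h4, h5, h6⟩ := this i
      exact ⟨_, _, _, hr _ _ h1, hr _ _ h2, hr _ _ h3, hr _ _ h4, hr _ _ h5, hr _ _ h6⟩
  · have a1 : ∀ x y, (if (ext G e).Adj (.inl x) (.inl y) then 1 else 0) +
        ((if x = e 0 then (if y = e 2 then 1 else 0) else 0) +
        (if x = e 2 then (if y = e 0 then 1 else 0) else 0) +
        (if x = e 1 then (if y = e 3 then 1 else 0) else 0) +
        (if x = e 3 then (if y = e 1 then 1 else 0) else 0)) = (if G.Adj x y then 1 else 0) := by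
      intro x y
      have hd : (ext G e).Adj (.inl x) (.inl y) ↔ Rest G e x y := Iff.rfl
      have := ne 0 1 (by decide)
      have := ne 0 2 (by decide)
      have := ne 0 3 (by decide)
      have := ne 1 2 (by decide)
      have := ne 1 3 (by decide)
      have := ne 2 3 (by decide)
      have := h02.symm
      have := h13.symm
      simp only [hd, Rest, Special]
      grind
    have a2 : ∀ x j, (if (ext G e).Adj (.inl x) (.inr j) then 1 else 0) = if x = e j then 1 else 0 :=
      fun x j => rfl
    have a3 : ∀ x j, (if (ext G e).Adj (.inr j) (.inl x) then 1 else 0) = if x = e j then 1 else 0 :=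
      fun x j => rfl
    have a4 : ∀ i j, (if (ext G e).Adj (.inr i) (.inr j) then 1 else 0) = if i ≠ j then 1 else 0 := by
      intro i j
      have hd : (ext G e).Adj (.inr i) (.inr j) ↔ i ≠ j := Iff.rfl
      simp only [hd]
    have b1 : ∑ x, ∑ y, (if (ext G e).Adj (.inl x) (.inl y) then 1 else 0) + 4 = 2 * m := by
      rw [← hsum]
      simp only [← a1, Finset.sum_add_distrib]
      congr 1
      simp
    have b2 : ∑ x, ∑ j, (if (ext G e).Adj (.inl x) (.inr j) then 1 else 0) = 4 := by
      rw [Finset.sum_comm]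
      simp [a2]
    have b3 : ∑ j, ∑ x, (if (ext G e).Adj (.inr j) (.inl x) then 1 else 0) = 4 := by
      simp [a3]
    have b4 : ∑ i, ∑ j, (if (ext G e).Adj (.inr i) (.inr j) then 1 else 0) = 12 := by
      simp only [a4]
      decide
    simp only [Fintype.sum_sum_type, Finset.sum_add_distrib]
    rw [b2, b3, b4]
    omega

theorem good_all (k : ℕ) : Good (8 + 4 * k) (16 + 8 * k) ∧ Good (9 + 4 * k) (19 + 8 * k) ∧
    Good (6 + 4 * k) (13 + 8 * k) ∧ Good (7 + 4 * k) (15 + 8 * k) := by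
  induction k with
  | zero => exact ⟨good8, good9, good6, good7⟩
  | succ k ih =>
    obtain ⟨h1, h2, h3, h4⟩ := ih
    have g1 := good_step (by omega) h1
    have g2 := good_step (by omega) h2
    have g3 := good_step (by omega) h3
    have g4 := good_step (by omega) h4
    exact ⟨g1, g2, g3, g4⟩

theorem good_h (n : ℕ) (h : 8 ≤ n) : Good n (if n % 4 = 0 then 2 * n else 2 * n + 1) := by
  have h4 : n % 4 = 0 ∨ n % 4 = 1 ∨ n % 4 = 2 ∨ n % 4 = 3 := by omega
  rcases h4 with h4 | h4 | h4 | h4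
  · convert (good_all ((n - 8) / 4)).1 using 1
    · omega
    · split_ifs <;> omega
  · convert (good_all ((n - 9) / 4)).2.1 using 1
    · omega
    · split_ifs <;> omega
  · convert (good_all ((n - 6) / 4)).2.2.1 using 1
    · omega
    · split_ifs <;> omega
  · convert (good_all ((n - 7) / 4)).2.2.2 using 1
    · omega
    · split_ifs <;> omega

open Classical in
theorem two_edges {V : Type*} [Fintype V] (G : SimpleGraph V) :
    ∑ v, ∑ w, (if G.Adj v w then 1 else 0) = 2 * G.edgeSet.ncard := by
  have h := G.sum_degrees_eq_twice_card_edges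
  rw [← SimpleGraph.coe_edgeFinset, Set.ncard_coe_finset, ← h]
  refine Finset.sum_congr rfl fun v _ => ?_
  rw [← SimpleGraph.card_neighborFinset_eq_degree, SimpleGraph.neighborFinset_eq_filter,
    Finset.card_filter]

theorem exists_graph {n m : ℕ} (hn : 4 < n) (h : Good n m) : ∃ G : SimpleGraph (Fin n),
    KConnected G 4 ∧ LocallyNonforesty G ∧ G.edgeSet.ncard = m := by
  classical
  obtain ⟨V, _, G, e, hc, hcut, hinj, h02, h13, hK, hsum⟩ := h
  let f : Fin n ≃ V := (Fintype.equivFinOfCardEq hc).symm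
  refine ⟨G.comap f, kconn_of_cut ?_ (by simpa using hn), ?_, ?_⟩
  · intro S hS χ hχ x y hx hy
    have := hcut (S.map f.toEmbedding) (by simpa using hS) (fun v => χ (f.symm v)) (by
      intro a b ha hb hab
      apply hχ
      · intro h; apply ha; simpa using h
      · intro h; apply hb; simpa using h
      · simpa using hab) (f x) (f y) (by simpa using hx) (by simpa using hy)
    simpa using this
  · intro v
    obtain ⟨x, y, z, h1, h2, h3, h4, h5, h6⟩ := hK (f v)
    apply nonacyclic_of_triangle (G.comap f) v (f.symm x) (f.symm y) (f.symm z)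
    · simpa using h1.1
    · simpa using h2.1
    · simpa using h3.1
    · simpa using h4.1
    · simpa using h5.1
    · simpa using h6.1
  · have h2 : 2 * (G.comap f).edgeSet.ncard = 2 * m := by
      rw [← hsum, ← two_edges, ← Equiv.sum_comp f]
      refine Finset.sum_congr rfl fun v _ => ?_
      rw [← Equiv.sum_comp f]
      refine Finset.sum_congr rfl fun w _ => ?_
      have hd : (G.comap f).Adj v w ↔ G.Adj (f v) (f w) := Iff.rfl
      simp only [hd]
    omega

/-- A nonempty proper vertex set cannot be closed after deleting few vertices. -/
theorem no_closed {V : Type*} [Fintype V] {G : SimpleGraph V} (hG : Cut G)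
    (A S : Finset V) (hS : S.card < 4) (x : V) (hxA : x ∈ A) (hxS : x ∉ S)
    (hsz : A.card + S.card < Fintype.card V)
    (hcl : ∀ u ∈ A, ∀ w, G.Adj u w → w ∈ A ∨ w ∈ S) : False := by
  classical
  have hex : ∃ y, y ∉ A ∪ S := by
    by_contra! hh
    have := Finset.card_le_card (fun x _ => hh x : (Finset.univ : Finset V) ⊆ A ∪ S)
    have h2 := Finset.card_union_le A S
    rw [Finset.card_univ] at this
    omega
  obtain ⟨y, hy⟩ := hex
  simp only [Finset.mem_union, not_or] at hy
  have := hG S hS (fun w => decide (w ∈ A)) (by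
    intro a b ha hb hab
    simp only [decide_eq_decide]
    exact ⟨fun h => (hcl a h b hab).resolve_right hb,
      fun h => (hcl b h a hab.symm).resolve_right ha⟩) x y hxS hy.2
  simp [hxA, hy.1] at this

theorem deg_ge {V : Type*} [Fintype V] {G : SimpleGraph V} [DecidableRel G.Adj] (hG : Cut G)
    (hc : 4 < Fintype.card V) (v : V) : 4 ≤ G.degree v := by
  by_contra! h
  rw [← SimpleGraph.card_neighborFinset_eq_degree] at h
  obtain ⟨w, hw, hw'⟩ := exists_nbr hG hc v _ h
  exact hw' (by simpa using hw)

/-- In a 4-regular graph, four distinct neighbours are all the neighbours. -/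
theorem nbr_cases {V : Type*} [Fintype V] {G : SimpleGraph V} [DecidableRel G.Adj]
    (hreg : ∀ v, G.degree v = 4) {v : V} (T : Finset V) (hT : T.card = 4)
    (h : ∀ x ∈ T, G.Adj v x) (w : V) (hw : G.Adj v w) : w ∈ T := by
  have h1 : T ⊆ G.neighborFinset v := fun x hx => by simpa using h x hx
  have h2 := Finset.eq_of_subset_of_card_le h1
    (by rw [SimpleGraph.card_neighborFinset_eq_degree, hreg, hT])
  rw [h2]
  simpa using hw

theorem card4 {V : Type*} [DecidableEq V] {a b c d : V} (h1 : a ≠ b) (h2 : a ≠ c) (h3 : a ≠ d)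
    (h4 : b ≠ c) (h5 : b ≠ d) (h6 : c ≠ d) : ({a, b, c, d} : Finset V).card = 4 := by
  rw [Finset.card_insert_of_notMem (by simp [*]), Finset.card_insert_of_notMem (by simp [*]),
    Finset.card_pair h6]

/-- In a 4-regular locally nonforesty graph, either there is a triangle in the neighbourhood, or
the neighbourhood is as in `cycle_set` with `T` the full neighbourhood. -/
theorem local_alt {V : Type*} [Fintype V] {G : SimpleGraph V} [DecidableRel G.Adj]
    (hreg : ∀ v, G.degree v = 4) (hL : LocallyNonforesty G) (v : V) :
    (∃ x y z, G.Adj v x ∧ G.Adj v y ∧ G.Adj v z ∧ G.Adj x y ∧ G.Adj y z ∧ G.Adj x z) ∨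
    (∀ x, G.Adj v x → ∃ y z, G.Adj v y ∧ G.Adj v z ∧ y ≠ z ∧ G.Adj x y ∧ G.Adj x z) := by
  classical
  obtain ⟨T, ⟨x, hx⟩, hT, h2⟩ := cycle_set G v (hL v)
  obtain ⟨y, hy, z, hz, hyz, hxy, hxz⟩ := h2 x hx
  by_cases hs : T ⊆ {x, y, z}
  · left
    refine ⟨x, y, z, hT x hx, hT y hy, hT z hz, hxy, ?_, hxz⟩
    obtain ⟨p, hp, q, hq, hpq, hyp, hyq⟩ := h2 y hy
    have hp' := hs hp
    have hq' := hs hq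
    simp only [Finset.mem_insert, Finset.mem_singleton] at hp' hq'
    have := hyp.ne
    have := hyq.ne
    grind
  · right
    obtain ⟨w, hw, hw'⟩ := Finset.not_subset.1 hs
    simp only [Finset.mem_insert, Finset.mem_singleton, not_or] at hw'
    have hc : ({x, y, z, w} : Finset V).card = 4 :=
      card4 hxy.ne hxz.ne (Ne.symm hw'.1) hyz (Ne.symm hw'.2.1) (Ne.symm hw'.2.2)
    intro u hu
    have huT := nbr_cases hreg _ hc (by grind) u hu
    have huT : u ∈ T := by grind
    obtain ⟨p, hp, q, hq, hpq, hup, huq⟩ := h2 u huT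
    exact ⟨p, q, hT p hp, hT q hq, hpq, hup, huq⟩

theorem nbr4 {V : Type*} [Fintype V] {G : SimpleGraph V} [DecidableRel G.Adj]
    (hreg : ∀ v, G.degree v = 4) {v a b c d : V} (h1 : a ≠ b) (h2 : a ≠ c) (h3 : a ≠ d)
    (h4 : b ≠ c) (h5 : b ≠ d) (h6 : c ≠ d) (ha : G.Adj v a) (hb : G.Adj v b) (hc : G.Adj v c)
    (hd : G.Adj v d) (w : V) (hw : G.Adj v w) : w = a ∨ w = b ∨ w = c ∨ w = d := by
  classical
  have := nbr_cases hreg {a, b, c, d} (card4 h1 h2 h3 h4 h5 h6)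
    (by simp only [Finset.mem_insert, Finset.mem_singleton]; rintro x (rfl | rfl | rfl | rfl) <;> assumption) w hw
  simpa using this

set_option maxHeartbeats 2000000 in
/-- every vertex is in a triangle of its neighbourhood -/
theorem tri {V : Type*} [Fintype V] {G : SimpleGraph V} [DecidableRel G.Adj]
    (hreg : ∀ v, G.degree v = 4) (hL : LocallyNonforesty G) (hG : Cut G)
    (h8 : 8 ≤ Fintype.card V) (v : V) :
    ∃ x y z, G.Adj v x ∧ G.Adj v y ∧ G.Adj v z ∧ G.Adj x y ∧ G.Adj y z ∧ G.Adj x z := by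
  classical
  rcases local_alt hreg hL v with h | h
  · exact h
  by_contra hno
  have ht : ∀ x y z, G.Adj v x → G.Adj v y → G.Adj v z → G.Adj x y → G.Adj y z → ¬ G.Adj x z :=
    fun x y z h1 h2 h3 h4 h5 h6 => hno ⟨x, y, z, h1, h2, h3, h4, h5, h6⟩
  obtain ⟨a, ha, -⟩ := exists_nbr hG (by omega) v ∅ (by simp)
  obtain ⟨b, d, hb, hd, hbd, hab, had⟩ := h a ha
  obtain ⟨c, hc, hcn⟩ := exists_nbr hG (by omega) v {a, b, d}
    (lt_of_le_of_lt Finset.card_le_three (by norm_num))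
  simp only [Finset.mem_insert, Finset.mem_singleton, not_or] at hcn
  obtain ⟨hca, hcb, hcd⟩ := hcn
  have Nv := nbr4 hreg hab.ne had.ne (Ne.symm hca) hbd (Ne.symm hcb) (Ne.symm hcd) ha hb hd hc
  have nbd : ¬ G.Adj b d := fun h => ht a b d ha hb hd hab h had
  -- b and d are adjacent to c, and a is not
  have hbc : G.Adj b c := by
    obtain ⟨p, q, hp, hq, hpq, hbp, hbq⟩ := h b hb
    have := Nv p hp
    have := Nv q hq
    have := hbp.ne
    have := hbq.ne
    grind
  have hdc : G.Adj d c := by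
    obtain ⟨p, q, hp, hq, hpq, hbp, hbq⟩ := h d hd
    have := Nv p hp
    have := Nv q hq
    have := hbp.ne
    have := hbq.ne
    have := fun h : G.Adj d b => nbd h.symm
    grind
  have nac : ¬ G.Adj a c := ht a b c ha hb hc hab hbc
  obtain ⟨x, hax, hxn⟩ := exists_nbr hG (by omega) a {v, b, d}
    (lt_of_le_of_lt Finset.card_le_three (by norm_num))
  simp only [Finset.mem_insert, Finset.mem_singleton, not_or] at hxn
  obtain ⟨hxv, hxb, hxd⟩ := hxn
  have hxa : x ≠ a := hax.ne.symm
  have hxc : x ≠ c := fun h => nac (h ▸ hax)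
  have nvx : ¬ G.Adj v x := fun h => by
    rcases Nv x h with h | h | h | h <;> contradiction
  have Na := nbr4 hreg hb.ne hd.ne (Ne.symm hxv) hbd (Ne.symm hxb) (Ne.symm hxd) ha.symm hab had hax
  have nxv : ¬ G.Adj x v := fun h => nvx h.symm
  have ndb : ¬ G.Adj d b := fun h => nbd h.symm
  have nca : ¬ G.Adj c a := fun h => nac h.symm
  have hxbd : G.Adj x b ∧ G.Adj x d := by
    rcases local_alt hreg hL a with ⟨p, q, r, h1, h2, h3, h4, h5, h6⟩ | h
    · exfalso
      have := Na p h1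
      have := Na q h2
      have := Na r h3
      have := h4.ne
      have := h5.ne
      have := h6.ne
      grind
    · obtain ⟨p, q, hp, hq, hpq, h1, h2⟩ := h x hax
      have := Na p hp
      have := Na q hq
      have := h1.ne
      have := h2.ne
      grind
  obtain ⟨hxb', hxd'⟩ := hxbd
  have Nb := nbr4 hreg ha.ne hc.ne (Ne.symm hxv) (Ne.symm hca) (Ne.symm hxa) (Ne.symm hxc)
    hb.symm hab.symm hbc hxb'.symm
  have hxc' : G.Adj x c := by
    rcases local_alt hreg hL b with ⟨p, q, r, h1, h2, h3, h4, h5, h6⟩ | h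
    · exfalso
      have := Nb p h1
      have := Nb q h2
      have := Nb r h3
      have := h4.ne
      have := h5.ne
      have := h6.ne
      grind
    · obtain ⟨p, q, hp, hq, hpq, h1, h2⟩ := h x hxb'.symm
      have := Nb p hp
      have := Nb q hq
      have := h1.ne
      have := h2.ne
      grind
  have Nd := nbr4 hreg ha.ne hc.ne (Ne.symm hxv) (Ne.symm hca) (Ne.symm hxa) (Ne.symm hxc)
    hd.symm had.symm hdc hxd'.symm
  have Nc := nbr4 hreg hb.ne hd.ne (Ne.symm hxv) hbd (Ne.symm hxb) (Ne.symm hxd)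
    hc.symm hbc.symm hdc.symm hxc'.symm
  have Nx := nbr4 hreg hab.ne had.ne (Ne.symm hca) hbd (Ne.symm hcb) (Ne.symm hcd)
    hax.symm hxb' hxd' hxc'
  refine no_closed hG {v, a, b, c, d, x} ∅ (by simp) v (by simp) (by simp) ?_ ?_
  · have := Finset.card_le_six (a := v) (b := a) (c := b) (d := c) (e := d) (f := x)
    simp only [Finset.card_empty]
    omega
  · intro u hu w hw
    left
    simp only [Finset.mem_insert, Finset.mem_singleton] at hu ⊢
    rcases hu with rfl | rfl | rfl | rfl | rfl | rfl
    · rcases Nv w hw with h | h | h | h <;> simp [h]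
    · rcases Na w hw with h | h | h | h <;> simp [h]
    · rcases Nb w hw with h | h | h | h <;> simp [h]
    · rcases Nc w hw with h | h | h | h <;> simp [h]
    · rcases Nd w hw with h | h | h | h <;> simp [h]
    · rcases Nx w hw with h | h | h | h <;> simp [h]

/-- The four-cliques containing a given vertex coincide. -/
theorem clique_unique {V : Type*} [Fintype V] [DecidableEq V] {G : SimpleGraph V}
    [DecidableRel G.Adj] (hreg : ∀ v, G.degree v = 4) (hG : Cut G)
    (h8 : 8 ≤ Fintype.card V) (v : V) (K L : Finset V) (hvK : v ∈ K) (hvL : v ∈ L)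
    (hK : K.card = 4) (hL : L.card = 4)
    (cK : ∀ x ∈ K, ∀ y ∈ K, x ≠ y → G.Adj x y) (cL : ∀ x ∈ L, ∀ y ∈ L, x ≠ y → G.Adj x y) :
    K = L := by
  by_contra hne
  have hsub : ∀ w ∈ K ∩ L, (K ∪ L).erase w ⊆ G.neighborFinset w := by
    intro w hw u hu
    simp only [Finset.mem_inter, Finset.mem_erase, Finset.mem_union] at hw hu
    simp only [SimpleGraph.mem_neighborFinset]
    rcases hu.2 with h | h
    · exact cK w hw.1 u h (Ne.symm hu.1)
    · exact cL w hw.2 u h (Ne.symm hu.1)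
  have hv : v ∈ K ∩ L := Finset.mem_inter.2 ⟨hvK, hvL⟩
  have h1 := Finset.card_le_card (hsub v hv)
  rw [SimpleGraph.card_neighborFinset_eq_degree, hreg,
    Finset.card_erase_of_mem (Finset.mem_union_left _ hvK)] at h1
  have h2 := Finset.card_union_add_card_inter K L
  have h3 : K.card < (K ∪ L).card := by
    apply Finset.card_lt_card
    refine Finset.ssubset_iff_subset_ne.2 ⟨Finset.subset_union_left, fun h => hne ?_⟩
    have hLK : L ⊆ K := by rw [h]; exact Finset.subset_union_right
    exact (Finset.eq_of_subset_of_card_le hLK (by omega)).symm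
  have h4 : (K ∪ L).card = 5 := by omega
  have h5 : (K ∩ L).card = 3 := by omega
  have h6 : ((K ∪ L) \ (K ∩ L)).card = 2 := by
    rw [Finset.card_sdiff_of_subset (Finset.inter_subset_union)]
    omega
  refine no_closed hG (K ∩ L) ((K ∪ L) \ (K ∩ L)) (by omega) v hv (by simp [hvK, hvL]) (by omega) ?_
  intro u hu w hw
  have h7 := Finset.eq_of_subset_of_card_le (hsub u hu) (by
    rw [SimpleGraph.card_neighborFinset_eq_degree, hreg,
      Finset.card_erase_of_mem (Finset.mem_union_left _ (Finset.mem_inter.1 hu).1)]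
    omega)
  have h8 : w ∈ (K ∪ L).erase u := by rw [h7]; simpa using hw
  have h9 := Finset.mem_of_mem_erase h8
  by_cases h : w ∈ K ∩ L
  · exact Or.inl h
  · exact Or.inr (Finset.mem_sdiff.2 ⟨h9, h⟩)

theorem four_dvd {V : Type*} [Fintype V] {G : SimpleGraph V}
    [DecidableRel G.Adj] (hreg : ∀ v, G.degree v = 4) (hLN : LocallyNonforesty G) (hG : Cut G)
    (h8 : 8 ≤ Fintype.card V) : 4 ∣ Fintype.card V := by
  classical
  have hex : ∀ v, ∃ K : Finset V, v ∈ K ∧ K.card = 4 ∧ ∀ x ∈ K, ∀ y ∈ K, x ≠ y → G.Adj x y := by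
    intro v
    obtain ⟨x, y, z, h1, h2, h3, h4, h5, h6⟩ := tri hreg hLN hG h8 v
    refine ⟨{v, x, y, z}, by simp, card4 h1.ne h2.ne h3.ne h4.ne h6.ne h5.ne, ?_⟩
    have := h1.symm
    have := h2.symm
    have := h3.symm
    have := h4.symm
    have := h5.symm
    have := h6.symm
    simp only [Finset.mem_insert, Finset.mem_singleton]
    rintro p (rfl | rfl | rfl | rfl) q (rfl | rfl | rfl | rfl) hpq <;>
      first | assumption | exact absurd rfl hpq
  choose f hf hf4 hfc using hex
  have hfe : ∀ v, ∀ w ∈ f v, f w = f v := fun v w hw =>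
    clique_unique hreg hG h8 w _ _ (hf w) hw (hf4 w) (hf4 v) (hfc w) (hfc v)
  rw [← Finset.card_univ, Finset.card_eq_sum_card_image f]
  apply Finset.dvd_sum
  intro K hK
  obtain ⟨v, -, rfl⟩ := Finset.mem_image.1 hK
  have : Finset.univ.filter (fun w => f w = f v) = f v := by
    ext w
    simp only [Finset.mem_filter, Finset.mem_univ, true_and]
    exact ⟨fun h => h ▸ hf w, hfe v w⟩
  rw [this, hf4]

/-- `h n` is the least possible size: it is attained by some 4-connected locally
nonforesty graph of order `n`, and it is a lower bound for the sizes of all such graphs. -/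
theorem stmt_2 (n : ℕ) (h8 : 8 ≤ n) :
    IsLeast {m : ℕ | ∃ G : SimpleGraph (Fin n),
        KConnected G 4 ∧ LocallyNonforesty G ∧ G.edgeSet.ncard = m}
      (if n % 4 = 0 then 2 * n else 2 * n + 1) := by
  classical
  refine ⟨exists_graph (by omega) (good_h n h8), ?_⟩
  rintro m ⟨G, hk, hL, rfl⟩
  have hG := cut_of_kconn hk
  have hd := deg_ge hG (by simp; omega)
  have hs := G.sum_degrees_eq_twice_card_edges
  rw [← SimpleGraph.coe_edgeFinset, Set.ncard_coe_finset]
  have hge : ∑ v : Fin n, 4 ≤ ∑ v, G.degree v := Finset.sum_le_sum fun v _ => hd v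
  have h4 : ∑ v : Fin n, 4 = n * 4 := by simp
  by_cases hreg : ∀ v, G.degree v = 4
  · have := four_dvd hreg hL hG (by simpa using h8)
    rw [Fintype.card_fin] at this
    rw [if_pos (by omega)]
    omega
  · push Not at hreg
    obtain ⟨v, hv⟩ := hreg
    have : ∑ v : Fin n, 4 < ∑ v, G.degree v := Finset.sum_lt_sum (fun v _ => hd v)
      ⟨v, Finset.mem_univ _, lt_of_le_of_ne (hd v) (Ne.symm hv)⟩
    split_ifs <;> omega
end

section
/- Let n ≥ 8 and let G be a 2-connected locally nonforesty graph of order n. Then the size of G is at least g(n), where g(n) = 2n − ⌊n/4⌋ if n ≡ 0 or 3 (mod 4), and g(n) = 2n + 1 − ⌊n/4⌋ otherwise. -/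
theorem closed_eq_univ {V : Type*} [Fintype V] [DecidableEq V] (G : SimpleGraph V)
    (hconn : KConnected G 2) (S T : Finset V) (hS : S.card ≤ 1) (hT : T.Nonempty)
    (hd : ∀ t ∈ T, t ∉ S) (hc : ∀ t ∈ T, ∀ u, G.Adj t u → u ∈ T ∨ u ∈ S) :
    Fintype.card V ≤ T.card + S.card := by
  have h := (hconn.2 S (by omega)).preconnected
  obtain ⟨t, ht⟩ := hT
  have hall : ∀ w, w ∈ T ∪ S := by
    intro w
    by_contra hw
    rw [Finset.mem_union, not_or] at hw
    obtain ⟨p⟩ := h ⟨t, by simpa using hd t ht⟩ ⟨w, by simpa using hw.2⟩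
    obtain ⟨d, _, h1, h2⟩ := p.exists_boundary_dart {a | (a : V) ∈ T} ht hw.1
    have h3 : G.Adj d.fst d.snd := d.adj
    rcases hc _ h1 _ h3 with h4 | h4
    · exact h2 h4
    · exact d.snd.2 (by simpa using h4)
  have : (Finset.univ : Finset V) ⊆ T ∪ S := fun w _ => hall w
  exact (Finset.card_le_card this).trans (Finset.card_union_le _ _)

theorem exists_core {V : Type*} [Fintype V] [DecidableEq V] (G : SimpleGraph V)
    [DecidableRel G.Adj] (hloc : LocallyNonforesty G) (v : V) :
    ∃ C : Finset V, C.Nonempty ∧ C ⊆ G.neighborFinset v ∧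
      ∀ c ∈ C, 2 ≤ (G.neighborFinset c ∩ C).card := by
  have h := hloc v
  unfold SimpleGraph.IsAcyclic at h
  push Not at h
  obtain ⟨a, p, hp⟩ := h
  classical
  refine ⟨p.support.toFinset.image Subtype.val, ⟨a, ?_⟩, ?_, ?_⟩
  · have ha : G.Adj v a := a.2
    simp only [Finset.mem_image, List.mem_toFinset]
    exact ⟨a, p.start_mem_support, rfl⟩
  · intro x hx
    simp at hx
    obtain ⟨hx, _⟩ := hx
    simpa using hx
  · intro c hc
    simp only [Finset.mem_image, List.mem_toFinset] at hc
    obtain ⟨c, hc, rfl⟩ := hc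
    have h2 := hp.ncard_neighborSet_toSubgraph_eq_two hc
    rw [← h2, ← Set.ncard_image_of_injective _ Subtype.val_injective, ← Set.ncard_coe_finset]
    apply Set.ncard_le_ncard _ (Finset.finite_toSet _)
    rintro _ ⟨y, hy, rfl⟩
    have hy' : p.toSubgraph.Adj c y := hy
    have h3 : G.Adj c y := hy'.adj_sub
    have h4 : y ∈ p.support := by
      simpa using hy'.snd_mem
    simp only [Finset.coe_inter, Set.mem_inter_iff, Finset.mem_coe, Finset.mem_image, List.mem_toFinset]
    exact ⟨by simpa using h3, y, h4, rfl⟩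

theorem core_card {V : Type*} [Fintype V] [DecidableEq V] (G : SimpleGraph V)
    [DecidableRel G.Adj] (C : Finset V) (hne : C.Nonempty)
    (hC : ∀ c ∈ C, 2 ≤ (G.neighborFinset c ∩ C).card) : 3 ≤ C.card := by
  obtain ⟨c, hc⟩ := hne
  have h1 : insert c (G.neighborFinset c ∩ C) ⊆ C := by
    intro x hx
    simp at hx
    rcases hx with rfl | hx
    · exact hc
    · exact hx.2
  have h2 := Finset.card_le_card h1
  rw [Finset.card_insert_of_notMem (by simp)] at h2
  have := hC c hc
  omega

theorem three_le_degree {V : Type*} [Fintype V] [DecidableEq V] (G : SimpleGraph V)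
    [DecidableRel G.Adj] (hloc : LocallyNonforesty G) (v : V) : 3 ≤ G.degree v := by
  obtain ⟨C, h1, h2, h3⟩ := exists_core G hloc v
  exact (core_card G C h1 h3).trans (Finset.card_le_card h2)

theorem clique_of_degree {V : Type*} [Fintype V] [DecidableEq V] (G : SimpleGraph V)
    [DecidableRel G.Adj] (hloc : LocallyNonforesty G) (v : V) (hv : G.degree v = 3)
    (a b : V) (ha : G.Adj v a) (hb : G.Adj v b) (hab : a ≠ b) : G.Adj a b := by
  obtain ⟨C, h1, h2, h3⟩ := exists_core G hloc v
  have h4 : C = G.neighborFinset v := by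
    apply Finset.eq_of_subset_of_card_le h2
    have := core_card G C h1 h3
    rw [SimpleGraph.card_neighborFinset_eq_degree]; omega
  have haC : a ∈ C := by rw [h4]; simpa using ha
  have h5 : G.neighborFinset a ∩ C = C.erase a := by
    apply Finset.eq_of_subset_of_card_le
    · intro x hx
      simp at hx ⊢
      exact ⟨hx.1.ne', hx.2⟩
    · have := h3 a haC
      rw [Finset.card_erase_of_mem haC, h4, SimpleGraph.card_neighborFinset_eq_degree, hv, ← h4]
      exact this
  have : b ∈ C.erase a := by rw [h4]; simp [hab.symm, hb]
  rw [← h5] at this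
  simpa using (Finset.mem_inter.1 this).1

section Structure

set_option linter.unusedSectionVars false

variable {V : Type*} [Fintype V] [DecidableEq V] (G : SimpleGraph V) [DecidableRel G.Adj]

/-- The facts extracted from the hypotheses. -/
structure Good_s5 : Prop where
  min : ∀ v, 3 ≤ G.degree v
  clique : ∀ v, G.degree v = 3 → ∀ a b, G.Adj v a → G.Adj v b → a ≠ b → G.Adj a b
  closed : ∀ S T : Finset V, S.card ≤ 1 → T.Nonempty → (∀ t ∈ T, t ∉ S) →
    (∀ t ∈ T, ∀ u, G.Adj t u → u ∈ T ∨ u ∈ S) → Fintype.card V ≤ T.card + S.card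
  core : ∀ v, ∃ C : Finset V, C.Nonempty ∧ C ⊆ G.neighborFinset v ∧
      ∀ c ∈ C, 2 ≤ (G.neighborFinset c ∩ C).card
  big : 8 ≤ Fintype.card V

/-- The neighbours of degree at least four. -/
def bigN (v : V) : Finset V := (G.neighborFinset v).filter (fun w => 4 ≤ G.degree w)

/-- Degree three vertices with two big neighbours. -/
def IsA (v : V) : Prop := G.degree v = 3 ∧ (bigN G v).card = 2

/-- Degree three vertices with three big neighbours. -/
def IsB (v : V) : Prop := G.degree v = 3 ∧ (bigN G v).card = 3

instance : DecidablePred (IsA G) := fun v => by unfold IsA; infer_instance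
instance : DecidablePred (IsB G) := fun v => by unfold IsB; infer_instance

/-- Number of neighbours of type A. -/
def nA (x : V) : ℕ := ((G.neighborFinset x).filter (IsA G)).card
/-- Number of neighbours of type B. -/
def nB (x : V) : ℕ := ((G.neighborFinset x).filter (IsB G)).card

variable {G}

theorem Good_s5.nbr3 (hG : Good_s5 G) (v : V) (hv : G.degree v = 3) (x : V) (hx : G.Adj v x) :
    ∃ y z, x ≠ y ∧ x ≠ z ∧ y ≠ z ∧ (∀ w, G.Adj v w ↔ w = x ∨ w = y ∨ w = z) ∧
      G.Adj x y ∧ G.Adj x z ∧ G.Adj y z := by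
  have h1 : ((G.neighborFinset v).erase x).card = 2 := by
    rw [Finset.card_erase_of_mem (by simpa using hx), SimpleGraph.card_neighborFinset_eq_degree, hv]
  obtain ⟨y, z, hyz, h2⟩ := Finset.card_eq_two.1 h1
  have h3 : ∀ w, (w ≠ x ∧ G.Adj v w) ↔ w = y ∨ w = z := by
    intro w
    have := Finset.ext_iff.1 h2 w
    simpa using this
  have hy := (h3 y).2 (Or.inl rfl)
  have hz := (h3 z).2 (Or.inr rfl)
  refine ⟨y, z, hy.1.symm, hz.1.symm, hyz, ?_, hG.clique v hv _ _ hx hy.2 hy.1.symm,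
    hG.clique v hv _ _ hx hz.2 hz.1.symm, hG.clique v hv _ _ hy.2 hz.2 hyz⟩
  intro w
  have := h3 w
  by_cases hw : w = x
  · subst hw; simp [hx]
  · simpa [hw] using this

theorem Good_s5.twin (hG : Good_s5 G) (v t : V) (hv : G.degree v = 3) (ht : G.degree t = 3)
    (h : G.Adj v t) (w : V) (hw : G.Adj t w) : w = v ∨ G.Adj v w := by
  obtain ⟨y, z, h1, h2, h3, h4, h5, h6, h7⟩ := hG.nbr3 v hv t h
  obtain ⟨y', z', g1, g2, g3, g4, g5, g6, g7⟩ := hG.nbr3 t ht v h.symm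
  have a1 := (g4 y).1 h5
  have a2 := (g4 z).1 h6
  have a3 := (g4 w).1 hw
  have b1 : G.Adj v y := (h4 y).2 (by simp)
  have b2 : G.Adj v z := (h4 z).2 (by simp)
  have c1 := b1.ne
  have c2 := b2.ne
  rw [h4]
  grind

theorem mem_bigN (v w : V) : w ∈ bigN G v ↔ G.Adj v w ∧ 4 ≤ G.degree w := by
  simp [bigN]

theorem Good_s5.A_or_B (hG : Good_s5 G) (v : V) (hv : G.degree v = 3) : IsA G v ∨ IsB G v := by
  have h3 : (bigN G v).card ≤ 3 := by
    rw [← hv]; exact Finset.card_le_card (Finset.filter_subset _ _)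
  have h2 : 2 ≤ (bigN G v).card := by
    by_contra hlt
    have hc := hG.closed (bigN G v) (insert v (G.neighborFinset v) \ bigN G v) (by omega)
      ⟨v, by simp [mem_bigN]⟩ (by intro t ht; exact (Finset.mem_sdiff.1 ht).2) (by
        intro t ht u hu
        by_cases hub : u ∈ bigN G v
        · exact Or.inr hub
        · left
          simp only [Finset.mem_sdiff, Finset.mem_insert, SimpleGraph.mem_neighborFinset] at ht ⊢
          refine ⟨?_, hub⟩
          rcases ht.1 with rfl | h
          · exact Or.inr hu
          · have : G.degree t = 3 := by
              have := hG.min t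
              have h' := ht.2
              rw [mem_bigN] at h'
              have : ¬ 4 ≤ G.degree t := fun h4 => h' ⟨h, h4⟩
              omega
            exact hG.twin v t hv this h u hu)
    have hs : bigN G v ⊆ insert v (G.neighborFinset v) :=
      (Finset.filter_subset _ _).trans (Finset.subset_insert _ _)
    rw [Finset.card_sdiff_add_card_eq_card hs] at hc
    have h5 := Finset.card_insert_le v (G.neighborFinset v)
    rw [SimpleGraph.card_neighborFinset_eq_degree] at h5
    have := hG.big
    omega
  unfold IsA IsB
  omega

theorem bigN_three (v x y z : V) (h : ∀ w, G.Adj v w ↔ w = x ∨ w = y ∨ w = z) :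
    bigN G v = ({x, y, z} : Finset V).filter (fun w => 4 ≤ G.degree w) := by
  ext w
  simp [mem_bigN, h]

theorem Good_s5.typeB (hG : Good_s5 G) (v : V) (hv : IsB G v) (x : V) (hx : G.Adj v x) :
    ∃ y z, x ≠ y ∧ x ≠ z ∧ y ≠ z ∧ (∀ w, G.Adj v w ↔ w = x ∨ w = y ∨ w = z) ∧
      G.Adj x y ∧ G.Adj x z ∧ G.Adj y z ∧ 4 ≤ G.degree x ∧ 4 ≤ G.degree y ∧ 4 ≤ G.degree z := by
  obtain ⟨y, z, h1, h2, h3, h4, h5, h6, h7⟩ := hG.nbr3 v hv.1 x hx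
  have hb : bigN G v = G.neighborFinset v := by
    apply Finset.eq_of_subset_of_card_le (Finset.filter_subset _ _)
    rw [SimpleGraph.card_neighborFinset_eq_degree, hv.1]
    exact hv.2.ge
  have hb' : ∀ w, G.Adj v w → 4 ≤ G.degree w := by
    intro w hw
    have : w ∈ bigN G v := by rw [hb]; simpa using hw
    exact ((mem_bigN v w).1 this).2
  exact ⟨y, z, h1, h2, h3, h4, h5, h6, h7, hb' x hx, hb' y ((h4 y).2 (by simp)),
    hb' z ((h4 z).2 (by simp))⟩

theorem Good_s5.typeA (hG : Good_s5 G) (v : V) (hv : IsA G v) (x : V) (hx : G.Adj v x)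
    (hxb : 4 ≤ G.degree x) :
    ∃ u y, x ≠ u ∧ x ≠ y ∧ u ≠ y ∧ IsA G u ∧ 4 ≤ G.degree y ∧ 
      (∀ w, G.Adj v w ↔ w = x ∨ w = u ∨ w = y) ∧
      (∀ w, G.Adj u w ↔ w = x ∨ w = v ∨ w = y) ∧ G.Adj x y := by
  have key : ∀ u y, x ≠ u → x ≠ y → u ≠ y → G.Adj x u → G.Adj x y → G.Adj u y → 
      (∀ w, G.Adj v w ↔ w = x ∨ w = u ∨ w = y) → ¬ 4 ≤ G.degree u → 4 ≤ G.degree y →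
      IsA G u ∧ (∀ w, G.Adj u w ↔ w = x ∨ w = v ∨ w = y) := by
    intro u y h1 h2 h3 h5 h6 h7 h4 hu hy
    have hu3 : G.degree u = 3 := by have := hG.min u; omega
    have hvu : G.Adj v u := (h4 u).2 (by simp)
    have hvy : G.Adj v y := (h4 y).2 (by simp)
    have hn : (∀ w, G.Adj u w ↔ w = x ∨ w = v ∨ w = y) := by
      intro w
      constructor
      · intro hw
        have := hG.twin v u hv.1 hu3 hvu w hw
        rw [h4] at this
        have := hw.ne
        grind
      · rintro (rfl | rfl | rfl)
        · exact h5.symm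
        · exact hvu.symm
        · exact h7
    refine ⟨⟨hu3, ?_⟩, hn⟩
    rw [bigN_three _ _ _ _ hn]
    have := hv.1
    have hv4 : ¬ 4 ≤ G.degree v := by omega
    rw [Finset.filter_insert, Finset.filter_insert, Finset.filter_singleton]
    simp only [hxb, hv4, hy, if_true, if_false]
    exact Finset.card_pair h2
  obtain ⟨u, y, h1, h2, h3, h4, h5, h6, h7⟩ := hG.nbr3 v hv.1 x hx
  have hc := hv.2
  rw [bigN_three _ _ _ _ h4, Finset.filter_insert, Finset.filter_insert, Finset.filter_singleton] at hc
  by_cases hu : 4 ≤ G.degree u <;> by_cases hy : 4 ≤ G.degree y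
  · simp only [hxb, hu, hy, if_true] at hc
    rw [Finset.card_eq_three.2 ⟨x, u, y, h1, h2, h3, rfl⟩] at hc
    omega
  · have h4' : (∀ w, G.Adj v w ↔ w = x ∨ w = y ∨ w = u) := by
      intro w; rw [h4]; tauto
    obtain ⟨k1, k2⟩ := key y u h2 h1 h3.symm h6 h5 h7.symm h4' hy hu
    exact ⟨y, u, h2, h1, h3.symm, k1, hu, h4', k2, h5⟩
  · obtain ⟨k1, k2⟩ := key u y h1 h2 h3 h5 h6 h7 h4 hu hy
    exact ⟨u, y, h1, h2, h3, k1, hy, h4, k2, h6⟩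
  · simp [hxb, hu, hy] at hc

theorem Good_s5.count (hG : Good_s5 G) (x : V) : nA G x + nB G x + (bigN G x).card = G.degree x := by
  rw [← SimpleGraph.card_neighborFinset_eq_degree]
  unfold nA nB bigN
  rw [← Finset.card_union_of_disjoint, ← Finset.card_union_of_disjoint]
  · congr 1
    ext w
    simp only [Finset.mem_union, Finset.mem_filter]
    constructor
    · tauto
    · intro h
      by_cases h4 : 4 ≤ G.degree w
      · tauto
      · have := hG.min w
        have := hG.A_or_B w (by omega)
        tauto
  · rw [Finset.disjoint_left]
    intro w hw hw'
    simp only [Finset.mem_union, Finset.mem_filter, IsA, IsB] at hw hw'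
    omega
  · rw [Finset.disjoint_left]
    intro w hw hw'
    simp only [Finset.mem_filter, IsA, IsB] at hw hw'
    omega

theorem Good_s5.bigN_of_B (hG : Good_s5 G) (x v : V) (h : G.Adj x v) (hv : IsB G v) :
    2 ≤ (bigN G x).card := by
  obtain ⟨y, z, h1, h2, h3, h4, h5, h6, h7, h8, h9, h10⟩ := hG.typeB v hv x h.symm
  rw [← Finset.card_pair h3]
  apply Finset.card_le_card
  intro w
  simp only [Finset.mem_insert, Finset.mem_singleton, mem_bigN]
  rintro (rfl | rfl) <;> tauto

theorem Good_s5.bigN_of_A (hG : Good_s5 G) (x v : V) (hx : 4 ≤ G.degree x) (h : G.Adj x v)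
    (hv : IsA G v) : 1 ≤ (bigN G x).card := by
  obtain ⟨u, y, h1, h2, h3, h4, h5, h6, h7, h8⟩ := hG.typeA v hv x h.symm hx
  exact Finset.card_pos.2 ⟨y, (mem_bigN _ _).2 ⟨h8, h5⟩⟩

theorem exists_of_nA (x : V) (h : 1 ≤ nA G x) : ∃ v, G.Adj x v ∧ IsA G v := by
  obtain ⟨v, hv⟩ := Finset.card_pos.1 h
  exact ⟨v, by simpa using hv⟩

theorem exists_of_nB (x : V) (h : 1 ≤ nB G x) : ∃ v, G.Adj x v ∧ IsB G v := by
  obtain ⟨v, hv⟩ := Finset.card_pos.1 h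
  exact ⟨v, by simpa using hv⟩

theorem nA_pos (x v : V) (h : G.Adj x v) (hv : IsA G v) : 1 ≤ nA G x :=
  Finset.card_pos.2 ⟨v, by simp [h, hv]⟩

theorem nB_pos (x v : V) (h : G.Adj x v) (hv : IsB G v) : 1 ≤ nB G x :=
  Finset.card_pos.2 ⟨v, by simp [h, hv]⟩

/-- A degree four vertex adjacent to a type A vertex. -/
theorem Good_s5.four_A (hG : Good_s5 G) (x v : V) (hx : G.degree x = 4) (h : G.Adj x v)
    (hv : IsA G v) : nA G x = 2 ∧ nB G x = 0 ∧ (bigN G x).card = 2 := by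
  obtain ⟨u, y, h1, h2, h3, h4, h5, h6, h7, h8⟩ := hG.typeA v hv x h.symm (by omega)
  have hxu : G.Adj x u := ((h7 x).2 (by simp)).symm
  have hvu : G.Adj v u := (h6 u).2 (by simp)
  have hvy : G.Adj v y := (h6 y).2 (by simp)
  have hcard : (G.neighborFinset x \ {v, u, y}).card = 1 := by
    rw [Finset.card_sdiff_of_subset]
    · rw [SimpleGraph.card_neighborFinset_eq_degree, hx,
        Finset.card_eq_three.2 ⟨v, u, y, hvu.ne, hvy.ne, h3, rfl⟩]
    · intro w
      simp only [Finset.mem_insert, Finset.mem_singleton, SimpleGraph.mem_neighborFinset]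
      rintro (rfl | rfl | rfl) <;> assumption
  obtain ⟨z, hz⟩ := Finset.card_eq_one.1 hcard
  have hz' : ∀ w, (G.Adj x w ∧ ¬ (w = v ∨ w = u ∨ w = y)) ↔ w = z := by
    intro w
    have := Finset.ext_iff.1 hz w
    simpa using this
  have hzz := (hz' z).2 rfl
  have hzb : 4 ≤ G.degree z := by
    by_contra hlt
    have hz3 : G.degree z = 3 := by have := hG.min z; omega
    obtain ⟨p, q, g1, g2, g3, g4, g5, g6, g7⟩ := hG.nbr3 z hz3 x hzz.1.symm
    have k1 := (hz' p).1
    have k2 := (hz' q).1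
    have zp : G.Adj z p := (g4 p).2 (by simp)
    have zq : G.Adj z q := (g4 q).2 (by simp)
    have e1 := zp.ne
    have e2 := zq.ne
    have e3 : ¬ G.Adj z v := by
      intro hh
      rcases (h6 z).1 hh.symm with e | e | e
      · exact hzz.1.ne e.symm
      · exact hzz.2 (by rw [e]; simp)
      · exact hzz.2 (by rw [e]; simp)
    have e4 : ¬ G.Adj z u := by
      intro hh
      rcases (h7 z).1 hh.symm with e | e | e
      · exact hzz.1.ne e.symm
      · exact hzz.2 (by rw [e]; simp)
      · exact hzz.2 (by rw [e]; simp)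
    have f1 : p = y := by
      by_contra hne
      have hpv : p ≠ v := by rintro rfl; exact e3 zp
      have hpu : p ≠ u := by rintro rfl; exact e4 zp
      exact e1 (k1 ⟨g5, fun hor => hor.elim hpv (fun hor => hor.elim hpu hne)⟩).symm
    have f2 : q = y := by
      by_contra hne
      have hpv : q ≠ v := by rintro rfl; exact e3 zq
      have hpu : q ≠ u := by rintro rfl; exact e4 zq
      exact e2 (k2 ⟨g6, fun hor => hor.elim hpv (fun hor => hor.elim hpu hne)⟩).symm
    exact g3 (f1.trans f2.symm)
  have hA : 2 ≤ nA G x := by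
    rw [← Finset.card_pair hvu.ne]
    apply Finset.card_le_card
    intro w
    simp only [Finset.mem_insert, Finset.mem_singleton, Finset.mem_filter,
      SimpleGraph.mem_neighborFinset]
    rintro (rfl | rfl)
    · exact ⟨h, hv⟩
    · exact ⟨hxu, h4⟩
  have hB : 2 ≤ (bigN G x).card := by
    rw [← Finset.card_pair (show y ≠ z by rintro rfl; exact hzz.2 (by simp))]
    apply Finset.card_le_card
    intro w
    simp only [Finset.mem_insert, Finset.mem_singleton, mem_bigN]
    rintro (rfl | rfl)
    · exact ⟨h8, h5⟩
    · exact ⟨hzz.1, hzb⟩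
  have := hG.count x
  omega

variable (G) in
/-- Six times the leftover charge. -/
def L (x : V) : ℤ := 12 * G.degree x - 42 - 3 * nA G x - 2 * nB G x

theorem Good_s5.L_nonneg (hG : Good_s5 G) (x : V) (hx : 4 ≤ G.degree x) : 0 ≤ L G x := by
  unfold L
  have hc := hG.count x
  by_cases hB : 1 ≤ nB G x
  · obtain ⟨v, hv, hv'⟩ := exists_of_nB x hB
    have := hG.bigN_of_B x v hv hv'
    by_cases hA : 1 ≤ nA G x
    · obtain ⟨v, hv, hv'⟩ := exists_of_nA x hA
      by_cases h4 : G.degree x = 4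
      · have := hG.four_A x v h4 hv hv'
        omega
      · omega
    · omega
  · by_cases hA : 1 ≤ nA G x
    · obtain ⟨v, hv, hv'⟩ := exists_of_nA x hA
      have := hG.bigN_of_A x v hx hv hv'
      by_cases h4 : G.degree x = 4
      · have := hG.four_A x v h4 hv hv'
        omega
      · omega
    · omega

theorem Good_s5.L_six (hG : Good_s5 G) (x : V) (hx : 6 ≤ G.degree x) : 13 ≤ L G x := by
  unfold L
  have hc := hG.count x
  by_cases hB : 1 ≤ nB G x
  · obtain ⟨v, hv, hv'⟩ := exists_of_nB x hB
    have := hG.bigN_of_B x v hv hv'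
    omega
  · by_cases hA : 1 ≤ nA G x
    · obtain ⟨v, hv, hv'⟩ := exists_of_nA x hA
      have := hG.bigN_of_A x v (by omega) hv hv'
      omega
    · omega

variable (G) in
/-- The set of big vertices. -/
def bigs : Finset V := Finset.univ.filter (fun x => 4 ≤ G.degree x)

theorem sum_n (P : V → Prop) [DecidablePred P] (k : ℕ) (hP : ∀ v, P v → (bigN G v).card = k) :
    ∑ x ∈ bigs G, ((G.neighborFinset x).filter P).card = k * (Finset.univ.filter P).card := by
  have h := Finset.sum_card_bipartiteAbove_eq_sum_card_bipartiteBelow (s := bigs G)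
    (t := Finset.univ.filter P) (fun x v => G.Adj x v)
  have h1 : ∀ x, (Finset.univ.filter P).bipartiteAbove (fun x v => G.Adj x v) x
      = (G.neighborFinset x).filter P := by
    intro x; ext w; simp [Finset.bipartiteAbove, and_comm]
  have h2 : ∀ v, (bigs G).bipartiteBelow (fun x v => G.Adj x v) v = bigN G v := by
    intro x; ext w; simp [Finset.bipartiteBelow, bigs, bigN, and_comm, G.adj_comm]
  simp only [h1, h2] at h
  rw [h, Finset.sum_congr rfl (fun v hv => hP v (Finset.mem_filter.1 hv).2)]
  simp [mul_comm]

theorem Good_s5.sum_L (hG : Good_s5 G) :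
    ∑ x ∈ bigs G, L G x = 6 * ∑ x, (2 * (G.degree x : ℤ) - 7) := by
  have hA : ∑ x ∈ bigs G, nA G x = _ := sum_n (G := G) (IsA G) 2 (fun v hv => hv.2)
  have hB : ∑ x ∈ bigs G, nB G x = _ := sum_n (G := G) (IsB G) 3 (fun v hv => hv.2)
  have hsplit := Finset.sum_filter_add_sum_filter_not Finset.univ (fun x => 4 ≤ G.degree x)
    (fun x => (2 * (G.degree x : ℤ) - 7))
  have h3 : ∑ x ∈ Finset.univ.filter (fun x => ¬ 4 ≤ G.degree x), (2 * (G.degree x : ℤ) - 7)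
      = - ((Finset.univ.filter (IsA G)).card + (Finset.univ.filter (IsB G)).card : ℤ) := by
    rw [Finset.sum_congr rfl (g := fun _ => (-1 : ℤ))]
    · rw [← Nat.cast_add, ← Finset.card_union_of_disjoint]
      · simp only [Finset.sum_const, nsmul_eq_mul, mul_neg, mul_one]
        congr 3
        ext w
        simp only [Finset.mem_filter, Finset.mem_union, Finset.mem_univ, true_and]
        constructor
        · intro h
          have := hG.min w
          exact hG.A_or_B w (by omega)
        · rintro (h | h) <;> (have := h.1; omega)
      · rw [Finset.disjoint_left]
        intro w hw hw'
        simp only [Finset.mem_filter, IsA, IsB] at hw hw'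
        omega
    · intro x hx
      have := hG.min x
      have h' := (Finset.mem_filter.1 hx).2
      have : G.degree x = 3 := by omega
      rw [this]; norm_num
  rw [← hsplit, h3]
  have hA' : ∑ x ∈ bigs G, (nA G x : ℤ) = 2 * (Finset.univ.filter (IsA G)).card := by
    exact_mod_cast hA
  have hB' : ∑ x ∈ bigs G, (nB G x : ℤ) = 3 * (Finset.univ.filter (IsB G)).card := by
    exact_mod_cast hB
  have : ∑ x ∈ bigs G, L G x = 6 * ∑ x ∈ bigs G, (2 * (G.degree x : ℤ) - 7)
      - 3 * ∑ x ∈ bigs G, (nA G x : ℤ) - 2 * ∑ x ∈ bigs G, (nB G x : ℤ) := by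
    rw [Finset.mul_sum, Finset.mul_sum, Finset.mul_sum, ← Finset.sum_sub_distrib,
      ← Finset.sum_sub_distrib]
    apply Finset.sum_congr rfl
    intro x _
    unfold L; ring
  rw [this, hA', hB']
  unfold bigs
  ring

theorem Good_s5.even_A (hG : Good_s5 G) : Even (Finset.univ.filter (IsA G)).card := by
  let H : SimpleGraph V :=
    { Adj := fun u v => G.Adj u v ∧ IsA G u ∧ IsA G v
      symm := ⟨fun u v h => ⟨h.1.symm, h.2.2, h.2.1⟩⟩
      loopless := ⟨fun u h => h.1.ne rfl⟩ }
  have : DecidableRel H.Adj := fun u v => by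
    change Decidable (G.Adj u v ∧ IsA G u ∧ IsA G v); infer_instance
  have h := H.sum_degrees_eq_twice_card_edges
  have hd : ∀ v, H.degree v = if IsA G v then 1 else 0 := by
    intro v
    split_ifs with hv
    · have h2 : 0 < (bigN G v).card := by rw [hv.2]; norm_num
      obtain ⟨x, hx⟩ := Finset.card_pos.1 h2
      rw [mem_bigN] at hx
      obtain ⟨u, y, h1, h2, h3, h4, h5, h6, h7, h8⟩ := hG.typeA v hv x hx.1 hx.2
      rw [← SimpleGraph.card_neighborFinset_eq_degree, Finset.card_eq_one]
      refine ⟨u, ?_⟩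
      ext w
      simp only [SimpleGraph.mem_neighborFinset, Finset.mem_singleton]
      constructor
      · rintro ⟨g1, g2, g3⟩
        rcases (h6 w).1 g1 with rfl | rfl | rfl
        · have := g3.1; omega
        · rfl
        · have := g3.1; omega
      · rintro rfl
        exact ⟨(h6 w).2 (by simp), hv, h4⟩
    · rw [← SimpleGraph.card_neighborFinset_eq_degree, Finset.card_eq_zero]
      ext w
      simp only [SimpleGraph.mem_neighborFinset, Finset.notMem_empty, iff_false]
      rintro ⟨g1, g2, g3⟩
      exact hv g2
  simp only [hd] at h
  rw [Finset.card_filter, h]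
  exact even_two_mul _

theorem Good_s5.L_five (hG : Good_s5 G) (x : V) (hx : 5 ≤ G.degree x) : 6 ≤ L G x := by
  by_cases h6 : 6 ≤ G.degree x
  · have := hG.L_six x h6
    omega
  unfold L
  have hc := hG.count x
  by_cases hB : 1 ≤ nB G x
  · obtain ⟨v, hv, hv'⟩ := exists_of_nB x hB
    have := hG.bigN_of_B x v hv hv'
    omega
  · by_cases hA : 1 ≤ nA G x
    · obtain ⟨v, hv, hv'⟩ := exists_of_nA x hA
      have := hG.bigN_of_A x v (by omega) hv hv'
      omega
    · omega

theorem Good_s5.sub_sum (hG : Good_s5 G) (s : Finset V) (hs : ∀ x ∈ s, 4 ≤ G.degree x) :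
    ∑ x ∈ s, L G x ≤ ∑ x ∈ bigs G, L G x := by
  apply Finset.sum_le_sum_of_subset_of_nonneg
  · intro x hx
    simpa [bigs] using hs x hx
  · intro x hx _
    exact hG.L_nonneg x (by simpa [bigs] using hx)

theorem four_nbrs (y a b c d : V) (hy : G.degree y = 4) (ha : G.Adj y a) (hb : G.Adj y b)
    (hc : G.Adj y c) (hd : G.Adj y d) (hab : a ≠ b) (hac : a ≠ c) (had : a ≠ d) (hbc : b ≠ c)
    (hbd : b ≠ d) (hcd : c ≠ d) (w : V) (hw : G.Adj y w) : w = a ∨ w = b ∨ w = c ∨ w = d := by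
  have h : ({a, b, c, d} : Finset V) = G.neighborFinset y := by
    apply Finset.eq_of_subset_of_card_le
    · intro w
      simp only [Finset.mem_insert, Finset.mem_singleton, SimpleGraph.mem_neighborFinset]
      rintro (rfl | rfl | rfl | rfl) <;> assumption
    · rw [SimpleGraph.card_neighborFinset_eq_degree, hy]
      simp [*]
  have h2 : w ∈ G.neighborFinset y := by simpa using hw
  rw [← h] at h2
  simpa using h2

theorem Good_s5.B_nbr (hG : Good_s5 G) (hs : ∑ x ∈ bigs G, L G x ≤ 12) (v x : V) (hv : IsB G v)
    (hx : G.Adj v x) : 4 ≤ L G x ∧ (L G x ≤ 4 → G.degree x = 4 ∧ nB G x = 1) := by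
  obtain ⟨y, z, h1, h2, h3, h4, h5, h6, h7, h8, h9, h10⟩ := hG.typeB v hv x hx
  have hb := hG.bigN_of_B x v hx.symm hv
  have hcount := hG.count x
  have hnB := nB_pos x v hx.symm hv
  have h66 : ¬ 6 ≤ G.degree x := by
    intro h
    have t1 := hG.L_six x h
    have t2 := hG.sub_sum {x} (by simpa using h8)
    simp at t2
    omega
  by_cases hd5 : G.degree x = 5
  · unfold L
    omega
  have hd4 : G.degree x = 4 := by omega
  have hnA : nA G x = 0 := by
    by_contra hne
    obtain ⟨a, ha, ha'⟩ := exists_of_nA (G := G) x (by omega)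
    have := hG.four_A x a hd4 ha ha'
    omega
  have hnB2 : nB G x ≠ 2 := by
    intro h22
    obtain ⟨v', hv'm, hne⟩ := Finset.exists_mem_ne (show 1 < nB G x by omega) v
    simp only [Finset.mem_filter, SimpleGraph.mem_neighborFinset] at hv'm
    obtain ⟨hxv', hv'⟩ := hv'm
    have hvy : G.Adj v y := (h4 y).2 (by simp)
    have hvz : G.Adj v z := (h4 z).2 (by simp)
    have hv3 := hv.1
    have hv3' := hv'.1
    have ny : v' ≠ y := by rintro rfl; omega
    have nz : v' ≠ z := by rintro rfl; omega
    have hN := four_nbrs x v v' y z hd4 hx.symm hxv' h5 h6 hne.symm hvy.ne hvz.ne ny nz h3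
    obtain ⟨p, q, g1, g2, g3, g4, g5, g6, g7, g8, g9, g10⟩ := hG.typeB v' hv' x hxv'.symm
    have hp := hN p g5
    have hq := hN q g6
    have np : p ≠ v := by rintro rfl; omega
    have np' : p ≠ v' := by rintro rfl; omega
    have nq : q ≠ v := by rintro rfl; omega
    have nq' : q ≠ v' := by rintro rfl; omega
    have g4' : ∀ w, G.Adj v' w ↔ w = x ∨ w = y ∨ w = z := by
      intro w
      rw [g4]
      have hp' : p = y ∨ p = z := (hp.resolve_left np).resolve_left np'
      have hq' : q = y ∨ q = z := (hq.resolve_left nq).resolve_left nq'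
      rcases hp' with e | e <;> rcases hq' with e' | e'
      · exact absurd (e.trans e'.symm) g3
      · rw [e, e']
      · rw [e, e', or_comm (a := w = z)]
      · exact absurd (e.trans e'.symm) g3
    have hv'y : G.Adj v' y := (g4' y).2 (by simp)
    have hv'z : G.Adj v' z := (g4' z).2 (by simp)
    have key : ∀ t, 4 ≤ G.degree t → G.Adj v t → G.Adj v' t → x ≠ t → G.degree t = 4 := by
      intro t ht ht1 ht2 hxt
      by_contra hne4
      have t2 := hG.sub_sum {x, t} (by simp; omega)
      rw [Finset.sum_pair hxt] at t2
      have : 11 ≤ L G t := by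
        by_cases ht6 : 6 ≤ G.degree t
        · have := hG.L_six t ht6; omega
        · have c1 := hG.count t
          have c2 := hG.bigN_of_B t v ht1.symm hv
          have c3 : 2 ≤ nB G t := by
            rw [← Finset.card_pair hne]
            apply Finset.card_le_card
            intro w
            simp only [Finset.mem_insert, Finset.mem_singleton, Finset.mem_filter,
              SimpleGraph.mem_neighborFinset]
            rintro (rfl | rfl)
            · exact ⟨ht2.symm, hv'⟩
            · exact ⟨ht1.symm, hv⟩
          unfold L
          omega
      have hLx : L G x = 2 := by unfold L; omega
      omega
    have hy4 := key y h9 hvy hv'y h1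
    have hz4 := key z h10 hvz hv'z h2
    have hNy := four_nbrs y v v' x z hy4 hvy.symm hv'y.symm h5.symm h7 hne.symm hx.ne hvz.ne
      hxv'.ne' nz h2
    have hNz := four_nbrs z v v' x y hz4 hvz.symm hv'z.symm h6.symm h7.symm hne.symm hx.ne hvy.ne
      hxv'.ne' ny h1
    have hcl := hG.closed ∅ {v, v', x, y, z} (by simp) (by simp) (by simp) (by
      intro t ht u hu
      left
      simp only [Finset.mem_insert, Finset.mem_singleton] at ht ⊢
      rcases ht with rfl | rfl | rfl | rfl | rfl
      · rcases (h4 u).1 hu with e | e | e <;> simp [e]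
      · rcases (g4' u).1 hu with e | e | e <;> simp [e]
      · rcases hN u hu with e | e | e | e <;> simp [e]
      · rcases hNy u hu with e | e | e | e <;> simp [e]
      · rcases hNz u hu with e | e | e | e <;> simp [e])
    have hc5 := Finset.card_le_five (a := v) (b := v') (c := x) (d := y) (e := z)
    have := hG.big
    simp only [Finset.card_empty] at hcl
    omega
  unfold L
  omega

theorem Good_s5.no_B (hG : Good_s5 G) (hs : ∑ x ∈ bigs G, L G x ≤ 12) (v : V) : ¬ IsB G v := by
  intro hv
  have hpos : 0 < G.degree v := by have := hG.min v; omega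
  obtain ⟨x, hx⟩ := (G.degree_pos_iff_exists_adj v).1 hpos
  obtain ⟨y, z, h1, h2, h3, h4, h5, h6, h7, h8, h9, h10⟩ := hG.typeB v hv x hx
  have hvy : G.Adj v y := (h4 y).2 (by simp)
  have hvz : G.Adj v z := (h4 z).2 (by simp)
  obtain ⟨lx, lx'⟩ := hG.B_nbr hs v x hv hx
  obtain ⟨ly, ly'⟩ := hG.B_nbr hs v y hv hvy
  obtain ⟨lz, lz'⟩ := hG.B_nbr hs v z hv hvz
  have hsum : ∑ w ∈ {x, y, z}, L G w = L G x + L G y + L G z := by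
    rw [Finset.sum_insert (by simp [h1, h2]), Finset.sum_pair h3]; ring
  have t3 := hG.sub_sum {x, y, z} (by simp; omega)
  rw [hsum] at t3
  obtain ⟨dx, bx⟩ := lx' (by omega)
  obtain ⟨dy, hby⟩ := ly' (by omega)
  obtain ⟨dz, bz⟩ := lz' (by omega)
  have hoth : ∀ w, 4 ≤ G.degree w → ¬ (w = x ∨ w = y ∨ w = z) → L G w ≤ 0 := by
    intro w hw hne
    have t4 := hG.sub_sum (insert w {x, y, z}) (by simp; omega)
    rw [Finset.sum_insert (by simpa using hne), hsum] at t4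
    omega
  have hdeg : ∀ w, G.degree w = 3 ∨ G.degree w = 4 := by
    intro w
    have := hG.min w
    by_contra hne
    have h5w : 5 ≤ G.degree w := by omega
    have l5 := hG.L_five w h5w
    have := hoth w (by omega) (by rintro (rfl | rfl | rfl) <;> omega)
    omega
  have huniq : ∀ v', IsB G v' → v' = v := by
    intro v' hv'
    have hpos' : 0 < G.degree v' := by have := hv'.1; omega
    obtain ⟨p, hp⟩ := (G.degree_pos_iff_exists_adj v').1 hpos'
    obtain ⟨_, _, _, _, _, _, _, _, _, g8, _⟩ := hG.typeB v' hv' p hp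
    obtain ⟨lp, _⟩ := hG.B_nbr hs v' p hv' hp
    have hmem : p = x ∨ p = y ∨ p = z := by
      by_contra hne
      have := hoth p g8 hne
      omega
    have hb1 : nB G p = 1 := by rcases hmem with rfl | rfl | rfl <;> assumption
    have hvp : G.Adj v p := (h4 p).2 hmem
    exact Finset.card_le_one.1 hb1.le v' (by simp [hp.symm, hv']) v (by simp [hvp.symm, hv])
  have hodd := G.even_card_odd_degree_vertices
  have heq : (Finset.univ.filter (fun w => Odd (G.degree w)))
      = insert v (Finset.univ.filter (IsA G)) := by
    ext w
    simp only [Finset.mem_filter, Finset.mem_univ, true_and, Finset.mem_insert]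
    constructor
    · intro ho
      have h3w : G.degree w = 3 := by
        rcases hdeg w with h | h
        · exact h
        · rw [h] at ho; exact absurd ho (by decide)
      rcases hG.A_or_B w h3w with h | h
      · exact Or.inr h
      · exact Or.inl (huniq w h)
    · rintro (rfl | h)
      · rw [hv.1]; decide
      · rw [h.1]; decide
  rw [heq, Finset.card_insert_of_notMem] at hodd
  · have := hG.even_A
    rw [Nat.even_add_one] at hodd
    exact hodd this
  · simp only [Finset.mem_filter, Finset.mem_univ, true_and]
    intro hA
    have e1 := hA.2
    have e2 := hv.2
    omega

theorem Good_s5.twin_all (hG : Good_s5 G) (u : V) (hu : G.degree u = 3) (y : V) (hy : G.Adj u y)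
    (w : V) (hw : G.Adj u w) : w = y ∨ G.Adj y w := by
  by_cases h : w = y
  · exact Or.inl h
  · exact Or.inr (hG.clique u hu y w hy hw (Ne.symm h))

theorem Good_s5.no_five_four (hG : Good_s5 G) (hs : ∑ x ∈ bigs G, L G x ≤ 12) (y : V)
    (hy : G.degree y = 5) : nA G y ≠ 4 := by
  intro h4
  have hnoB := hG.no_B hs
  have hc := hG.count y
  have hB0 : nB G y = 0 := by
    by_contra hne
    obtain ⟨v, _, hv⟩ := exists_of_nB (G := G) y (by omega)
    exact hnoB v hv
  obtain ⟨q, hq⟩ := Finset.card_eq_one.1 (show (bigN G y).card = 1 by omega)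
  have hq' : ∀ w, (G.Adj y w ∧ 4 ≤ G.degree w) ↔ w = q := by
    intro w; rw [← mem_bigN, hq]; simp
  obtain ⟨hyq, hqb⟩ := (hq' q).2 rfl
  have hA : ∀ u, G.Adj y u → IsA G u → ∀ w, G.Adj u w → w = y ∨ G.Adj y w := by
    intro u hu hu' w hw
    rcases (hG.twin_all u hu'.1 y hu.symm) w hw with h | h
    · exact Or.inl h
    · exact Or.inr h
  have hAq : ∀ u, G.Adj y u → IsA G u → G.Adj u q := by
    intro u hu hu'
    obtain ⟨t, r, g1, g2, g3, g4, g5, g6, g7, g8⟩ := hG.typeA u hu' y hu.symm (by omega)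
    have : r = q := (hq' r).1 ⟨g8, g5⟩
    rw [← this]
    exact (g6 r).2 (by simp)
  have hq5 : G.degree q ≤ 5 := by
    by_contra hlt
    have t1 := hG.L_six q (by omega)
    have t2 := hG.sub_sum {q} (by simpa using hqb)
    simp at t2
    omega
  have hNq : insert y ((G.neighborFinset y).filter (IsA G)) = G.neighborFinset q := by
    apply Finset.eq_of_subset_of_card_le
    · intro w
      simp only [Finset.mem_insert, Finset.mem_filter, SimpleGraph.mem_neighborFinset]
      rintro (rfl | ⟨g1, g2⟩)
      · exact hyq.symm
      · exact (hAq w g1 g2).symm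
    · rw [Finset.card_insert_of_notMem (by simp), SimpleGraph.card_neighborFinset_eq_degree]
      unfold nA at h4
      omega
  have hcl := hG.closed ∅ (insert y (G.neighborFinset y)) (by simp) (by simp) (by simp) (by
    intro t ht u hu
    left
    simp only [Finset.mem_insert, SimpleGraph.mem_neighborFinset] at ht ⊢
    rcases ht with rfl | ht
    · exact Or.inr hu
    · by_cases htb : 4 ≤ G.degree t
      · have : t = q := (hq' t).1 ⟨ht, htb⟩
        subst this
        have hm : u ∈ G.neighborFinset t := by simpa using hu
        rw [← hNq] at hm
        simp only [Finset.mem_insert, Finset.mem_filter, SimpleGraph.mem_neighborFinset] at hm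
        tauto
      · have := hG.min t
        rcases hG.A_or_B t (by omega) with h | h
        · exact hA t ht h u hu
        · exact absurd h (hnoB t))
  have h5 := Finset.card_insert_le y (G.neighborFinset y)
  rw [SimpleGraph.card_neighborFinset_eq_degree] at h5
  have := hG.big
  simp only [Finset.card_empty] at hcl
  omega

theorem Good_s5.no_five (hG : Good_s5 G) (hs : ∑ x ∈ bigs G, L G x ≤ 12) (y : V) :
    G.degree y ≤ 4 := by
  have hnoB := hG.no_B hs
  have hB0 : ∀ x, nB G x = 0 := by
    intro x
    by_contra hne
    obtain ⟨v, _, hv⟩ := exists_of_nB (G := G) x (by omega)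
    exact hnoB v hv
  have h5 : ∀ x, G.degree x ≤ 5 := by
    intro x
    by_contra hlt
    have t1 := hG.L_six x (by omega)
    have t2 := hG.sub_sum {x} (by simp; omega)
    simp at t2
    omega
  have hL : ∀ x, G.degree x = 5 → 9 ≤ L G x := by
    intro x hx
    have h4 := hG.no_five_four hs x hx
    have hc := hG.count x
    have h0 := hB0 x
    have : nA G x ≠ 5 := by
      intro h55
      obtain ⟨v, hv, hv'⟩ := exists_of_nA (G := G) x (by omega)
      have := hG.bigN_of_A x v (by omega) hv hv'
      omega
    unfold L
    omega
  by_contra hlt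
  have hy5 : G.degree y = 5 := by have := h5 y; omega
  have hodd := G.even_card_odd_degree_vertices
  have heq : (Finset.univ.filter (fun w => Odd (G.degree w)))
      = insert y (Finset.univ.filter (IsA G)) := by
    ext w
    simp only [Finset.mem_filter, Finset.mem_univ, true_and, Finset.mem_insert]
    constructor
    · intro ho
      have c1 := hG.min w
      have c2 := h5 w
      have c3 : G.degree w ≠ 4 := by
        intro h; rw [h] at ho; exact absurd ho (by decide)
      by_cases h3w : G.degree w = 3
      · rcases hG.A_or_B w h3w with h | h
        · exact Or.inr h
        · exact absurd h (hnoB w)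
      · left
        by_contra hne
        have hw5 : G.degree w = 5 := by omega
        have t2 := hG.sub_sum {w, y} (by simp; omega)
        rw [Finset.sum_pair hne] at t2
        have := hL w hw5
        have := hL y hy5
        omega
    · rintro (rfl | h)
      · rw [hy5]; decide
      · rw [h.1]; decide
  rw [heq, Finset.card_insert_of_notMem] at hodd
  · have := hG.even_A
    rw [Nat.even_add_one] at hodd
    exact hodd this
  · simp only [Finset.mem_filter, Finset.mem_univ, true_and]
    intro hA
    have e1 := hA.1
    omega

theorem Good_s5.sum_zero (hG : Good_s5 G) (hs : ∑ x ∈ bigs G, L G x ≤ 12) :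
    ∑ x ∈ bigs G, L G x ≤ 0 := by
  have hnoB := hG.no_B hs
  have hle4 := hG.no_five hs
  have hB0 : ∀ x, nB G x = 0 := by
    intro x
    by_contra hne
    obtain ⟨v, _, hv⟩ := exists_of_nB (G := G) x (by omega)
    exact hnoB v hv
  have hL : ∀ x, G.degree x = 4 → nA G x = 0 → L G x = 6 := by
    intro x hx h0
    have := hB0 x
    unfold L
    omega
  have hL0 : ∀ x, G.degree x = 4 → nA G x ≠ 0 → L G x = 0 ∧ (bigN G x).card = 2 := by
    intro x hx h0
    have := hB0 x
    obtain ⟨v, hv, hv'⟩ := exists_of_nA (G := G) x (by omega)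
    have := hG.four_A x v hx hv hv'
    unfold L
    omega
  apply Finset.sum_nonpos
  intro x hx
  have hxb : 4 ≤ G.degree x := by simpa [bigs] using hx
  have hx4 : G.degree x = 4 := by have := hle4 x; omega
  by_contra hpos
  have hx0 : nA G x = 0 := by
    by_contra hne
    have := (hL0 x hx4 hne).1
    omega
  obtain ⟨C, hC1, hC2, hC3⟩ := hG.core x
  have hC4 := core_card G C hC1 hC3
  have hCadj : ∀ c ∈ C, G.Adj x c := fun c hc => by simpa using hC2 hc
  have hCb : ∀ c ∈ C, G.degree c = 4 := by
    intro c hc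
    have c1 := hG.min c
    have c2 := hle4 c
    by_contra hne
    rcases hG.A_or_B c (by omega) with h | h
    · have := nA_pos x c (hCadj c hc) h
      omega
    · exact hnoB c h
  have hex : ∃ c ∈ C, nA G c ≠ 0 := by
    by_contra hall
    push Not at hall
    have t := hG.sub_sum C (fun c hc => by have := hCb c hc; omega)
    rw [Finset.sum_congr rfl (fun c hc => hL c (hCb c hc) (hall c hc))] at t
    simp at t
    omega
  obtain ⟨c, hc, hcA⟩ := hex
  have h2 := (hL0 c (hCb c hc) hcA).2
  have hsub : insert x (G.neighborFinset c ∩ C) ⊆ bigN G c := by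
    intro w
    rw [mem_bigN]
    simp only [Finset.mem_insert, Finset.mem_inter, SimpleGraph.mem_neighborFinset]
    rintro (rfl | ⟨g1, g2⟩)
    · exact ⟨(hCadj c hc).symm, hxb⟩
    · exact ⟨g1, (hCb w g2).ge⟩
  have h3 := Finset.card_le_card hsub
  rw [Finset.card_insert_of_notMem] at h3
  · have := hC3 c hc
    omega
  · intro hm
    have := hCadj x (Finset.mem_inter.1 hm).2
    exact this.ne rfl

end Structure

theorem stmt_5 {V : Type*} [Fintype V] (G : SimpleGraph V) (n : ℕ)
    (hn : Fintype.card V = n) (h8 : 8 ≤ n)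
    (hconn : KConnected G 2) (hloc : LocallyNonforesty G) :
    (if n % 4 = 0 ∨ n % 4 = 3 then 2 * n - n / 4 else 2 * n + 1 - n / 4)
      ≤ G.edgeSet.ncard := by
  classical
  have hG : Good_s5 G :=
    { min := three_le_degree G hloc
      clique := clique_of_degree G hloc
      closed := closed_eq_univ G hconn
      core := exists_core G hloc
      big := by omega }
  have h1 := hG.sum_L
  have h2 : ∑ x, (2 * (G.degree x : ℤ) - 7) = 4 * G.edgeFinset.card - 7 * n := by
    rw [Finset.sum_sub_distrib, ← Finset.mul_sum]
    have := G.sum_degrees_eq_twice_card_edges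
    have h' : ∑ x, (G.degree x : ℤ) = 2 * G.edgeFinset.card := by exact_mod_cast this
    rw [h']
    simp [hn]
    ring
  have h3 : 0 ≤ ∑ x ∈ bigs G, L G x := by
    simpa using hG.sub_sum ∅ (by simp)
  have h4 := hG.sum_zero
  rw [h1, h2] at h3 h4
  have h5 : G.edgeSet.ncard = G.edgeFinset.card := by
    rw [← SimpleGraph.coe_edgeFinset, Set.ncard_coe_finset]
  rw [h5]
  generalize G.edgeFinset.card = e at *
  split_ifs <;> omega
end

section
/- For every integer n ≥ 8 there exists a 2-connected locally nonforesty graph of order n whose size equals g(n), where g(n) = 2n − ⌊n/4⌋ if n ≡ 0 or 3 (mod 4), and g(n) = 2n + 1 − ⌊n/4⌋ otherwise. Consequently, the minimum size of a 2-connected locally nonforesty graph of order n is exactly g(n). -/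
set_option linter.unusedSectionVars false
set_option linter.unusedVariables false
namespace Stmt6
open Finset SimpleGraph

variable {V : Type*} [Fintype V] [DecidableEq V] (G : SimpleGraph V) [DecidableRel G.Adj]

/-- neighbours of degree three -/
def tn (v : V) : Finset V := (G.neighborFinset v).filter (fun u => G.degree u = 3)
/-- neighbours of degree other than three -/
def hn (v : V) : Finset V := (G.neighborFinset v).filter (fun u => G.degree u ≠ 3)

/-- combinatorial reformulation of the hypotheses -/
structure Good : Prop where
  cyc : ∀ v, ∃ C ⊆ G.neighborFinset v, C.Nonempty ∧ ∀ x ∈ C, 2 ≤ (C.filter (G.Adj x)).card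
  con : ∀ S A : Finset V, S.card ≤ 1 → A.Nonempty → Disjoint A S → (A ∪ S) ≠ univ →
    ∃ a ∈ A, ∃ b, b ∉ A ∧ b ∉ S ∧ G.Adj a b
  big : 8 ≤ Fintype.card V

variable {G}

theorem mem_tn {v u : V} : u ∈ tn G v ↔ G.Adj v u ∧ G.degree u = 3 := by simp [tn]
theorem mem_hn {v u : V} : u ∈ hn G v ↔ G.Adj v u ∧ G.degree u ≠ 3 := by simp [hn]

theorem tn_add_hn (v : V) : (tn G v).card + (hn G v).card = G.degree v := by
  rw [← G.card_neighborFinset_eq_degree]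
  exact card_filter_add_card_filter_not (s := G.neighborFinset v) (fun u => G.degree u = 3)

theorem good_of (h8 : 8 ≤ Fintype.card V) (hc : KConnected G 2) (hl : LocallyNonforesty G) :
    Good G := by
  refine ⟨fun v => ?_, fun S A hS hA hd hne => ?_, h8⟩
  · have := hl v
    unfold IsAcyclic at this
    push Not at this
    obtain ⟨u, c, hcy⟩ := this
    refine ⟨c.support.toFinset.map (Function.Embedding.subtype _), ?_, ?_, ?_⟩
    · intro x hx
      simp only [Finset.mem_map, List.mem_toFinset, Function.Embedding.coe_subtype] at hx
      obtain ⟨y, _, rfl⟩ := hx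
      rw [mem_neighborFinset]; exact y.2
    · exact ⟨u, Finset.mem_map.2 ⟨u, by simp, rfl⟩⟩
    · intro x hx
      simp only [Finset.mem_map, List.mem_toFinset, Function.Embedding.coe_subtype] at hx
      obtain ⟨y, hy, rfl⟩ := hx
      have h2 := hcy.ncard_neighborSet_toSubgraph_eq_two hy
      rw [← h2, ← Set.ncard_image_of_injective _ Subtype.val_injective, ← Set.ncard_coe_finset]
      apply Set.ncard_le_ncard _ (Set.toFinite _)
      rintro _ ⟨z, hz, rfl⟩
      have hz' : c.toSubgraph.Adj y z := hz
      have h3 := hz'.adj_sub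
      have h4 := c.toSubgraph.edge_vert hz'.symm
      rw [Walk.mem_verts_toSubgraph] at h4
      have h5 : G.Adj (y : V) (z : V) := h3
      simp only [coe_filter, Set.mem_ofPred_eq, h5, and_true]
      simp only [Finset.mem_map, List.mem_toFinset, Function.Embedding.coe_subtype]
      exact ⟨z, h4, rfl⟩
  · have hcon := hc.2 S (by omega)
    by_contra hno
    push Not at hno
    obtain ⟨a, ha⟩ := hA
    obtain ⟨b, hb⟩ : ∃ b, b ∉ A ∪ S := by
      by_contra hall
      push Not at hall
      exact hne (eq_univ_iff_forall.2 hall)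
    simp only [mem_union, not_or] at hb
    have haS : a ∉ S := Finset.disjoint_left.1 hd ha
    have key : ∀ (x y : ((↑S : Set V)ᶜ : Set V)), (G.induce ((↑S : Set V)ᶜ)).Walk x y →
        (x : V) ∈ A → (y : V) ∈ A := by
      intro x y p
      induction p with
      | nil => exact id
      | cons hadj p ih =>
        intro hx
        apply ih
        by_contra hv
        rename_i u v w
        exact hno _ hx _ hv (fun h => v.2 (by exact_mod_cast h)) hadj
    obtain ⟨p⟩ := hcon.preconnected ⟨a, by simpa using haS⟩ ⟨b, by simpa using hb.2⟩
    exact hb.1 (key _ _ p ha)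

section
variable (hG : Good G)
include hG

theorem card_C {v : V} {C : Finset V} (hne : C.Nonempty)
    (h2 : ∀ x ∈ C, 2 ≤ (C.filter (G.Adj x)).card) : 3 ≤ C.card := by
  obtain ⟨x, hx⟩ := hne
  have h1 := h2 x hx
  have : C.filter (G.Adj x) ⊆ C.erase x := by
    intro y hy
    rw [mem_filter] at hy
    exact mem_erase.2 ⟨hy.2.ne', hy.1⟩
  have := card_le_card this
  rw [card_erase_of_mem hx] at this
  omega

theorem clique_C {C : Finset V} (h3 : C.card = 3)
    (h2 : ∀ x ∈ C, 2 ≤ (C.filter (G.Adj x)).card) {x y : V} (hx : x ∈ C) (hy : y ∈ C)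
    (hxy : x ≠ y) : G.Adj x y := by
  have h1 := h2 x hx
  have hs : C.filter (G.Adj x) ⊆ C.erase x := by
    intro y hy
    rw [mem_filter] at hy
    exact mem_erase.2 ⟨hy.2.ne', hy.1⟩
  have := eq_of_subset_of_card_le hs (by rw [card_erase_of_mem hx]; omega)
  have hy' : y ∈ C.erase x := mem_erase.2 ⟨hxy.symm, hy⟩
  rw [← this, mem_filter] at hy'
  exact hy'.2

theorem three_le (v : V) : 3 ≤ G.degree v := by
  obtain ⟨C, hC, hne, h2⟩ := hG.cyc v
  have := card_C (v := v) hG hne h2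
  have := card_le_card hC
  rw [G.card_neighborFinset_eq_degree] at this
  omega

theorem T_clique {v a b : V} (hv : G.degree v = 3) (ha : G.Adj v a) (hb : G.Adj v b)
    (hab : a ≠ b) : G.Adj a b := by
  obtain ⟨C, hC, hne, h2⟩ := hG.cyc v
  have h3 := card_C (v := v) hG hne h2
  have hc := eq_of_subset_of_card_le hC (by rw [G.card_neighborFinset_eq_degree]; omega)
  have h4 : C.card = 3 := by rw [hc, G.card_neighborFinset_eq_degree, hv]
  exact clique_C hG h4 h2 (by rw [hc]; simpa) (by rw [hc]; simpa) hab

theorem T_closed {v a b : V} (hv : G.degree v = 3) (ha3 : G.degree a = 3) (ha : G.Adj v a)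
    (hb : G.Adj a b) (hbv : b ≠ v) : G.Adj v b :=
  (T_clique hG ha3 ha.symm hb hbv.symm)

theorem T_tn {v : V} (hv : G.degree v = 3) : (tn G v).card ≤ 1 := by
  by_contra hlt
  push Not at hlt
  obtain ⟨a, ha, b, hb, hab⟩ := one_lt_card.1 hlt
  rw [mem_tn] at ha hb
  have hN : (G.neighborFinset v).card = 3 := by rw [G.card_neighborFinset_eq_degree, hv]
  have hsub : ({a, b} : Finset V) ⊆ G.neighborFinset v := by
    intro x hx; simp at hx; rcases hx with rfl | rfl <;> simp [ha.1, hb.1]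
  have hS : (G.neighborFinset v \ {a, b}).card ≤ 1 := by
    rw [card_sdiff_of_subset hsub, card_pair hab, hN]
  obtain ⟨p, hp, q, hq1, hq2, hpq⟩ := hG.con (G.neighborFinset v \ {a, b}) {v, a, b} hS
    (by simp) (by
      rw [Finset.disjoint_left]; intro x hx; simp at hx ⊢
      rcases hx with rfl | rfl | rfl <;> simp) (by
      intro hu
      have h8 := hG.big
      rw [← card_univ, ← hu] at h8
      have := card_union_le {v, a, b} (G.neighborFinset v \ {a, b})
      have := card_le_three (a := v) (b := a) (c := b)
      omega)
  have hvq : G.Adj v q := by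
    simp only [mem_insert, mem_singleton, not_or] at hp hq1
    rcases hp with rfl | rfl | rfl
    · exact hpq
    · exact T_closed hG hv ha.2 ha.1 hpq hq1.1
    · exact T_closed hG hv hb.2 hb.1 hpq hq1.1
  apply hq2
  simp only [mem_insert, mem_singleton, not_or] at hq1
  simp [hvq, hq1]

theorem T_hn {v : V} (hv : G.degree v = 3) : 2 ≤ (hn G v).card := by
  have := T_tn hG hv
  have := tn_add_hn (G := G) v
  omega

theorem hn_sub {a h : V} (ha : G.degree a = 3) (hah : G.Adj a h) :
    (hn G a).erase h ⊆ hn G h := by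
  intro x hx
  rw [mem_erase, mem_hn] at hx
  rw [mem_hn]
  exact ⟨T_clique hG ha hah hx.2.1 hx.1.symm, hx.2.2⟩

theorem tn_sub {a h : V} (ha : G.degree a = 3) (hah : G.Adj a h) (hh : G.degree h ≠ 3) :
    tn G a ⊆ tn G h := by
  intro x hx
  rw [mem_tn] at hx ⊢
  exact ⟨T_clique hG ha hah hx.1 (by rintro rfl; exact hh hx.2), hx.2⟩

theorem hn_pos (h : V) : 1 ≤ (hn G h).card := by
  by_cases hh : G.degree h = 3
  · have := T_hn hG hh; omega
  · by_contra hlt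
    have h0 : (hn G h).card = 0 := by omega
    have h1 := tn_add_hn (G := G) h
    have h3 := three_le hG h
    obtain ⟨a, ha⟩ := card_pos.1 (show 0 < (tn G h).card by omega)
    rw [mem_tn] at ha
    have h4 := card_le_card (hn_sub hG ha.2 ha.1.symm)
    have h5 := T_hn hG ha.2
    have h6 := pred_card_le_card_erase (s := hn G a) (a := h)
    omega

theorem four_hn {h : V} (hh : G.degree h = 4) : 2 ≤ (hn G h).card := by
  by_contra hlt
  have h1 := hn_pos hG h
  have h2 : (tn G h).card = 3 := by have := tn_add_hn (G := G) h; omega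
  have hne : G.degree h ≠ 3 := by omega
  have one : ∀ a ∈ tn G h, (tn G a).card = 1 := by
    intro a ha
    rw [mem_tn] at ha
    have h4 := card_le_card (hn_sub hG ha.2 ha.1.symm)
    have h6 := pred_card_le_card_erase (s := hn G a) (a := h)
    have h7 := tn_add_hn (G := G) a
    have := T_tn hG ha.2
    omega
  obtain ⟨a, ha⟩ := card_pos.1 (show 0 < (tn G h).card by omega)
  obtain ⟨b, hb⟩ := card_eq_one.1 (one a ha)
  have ha' := mem_tn.1 ha
  have hbh : b ∈ tn G h := tn_sub hG ha'.2 ha'.1.symm hne (by simp [hb])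
  have hab : b ∈ tn G a := by simp [hb]
  have hb' := mem_tn.1 hab
  obtain ⟨c, hc⟩ := card_pos.1 (show 0 < (tn G h \ {a, b}).card by
    have := le_card_sdiff {a, b} (tn G h)
    have := card_le_two (a := a) (b := b)
    omega)
  simp only [mem_sdiff, mem_insert, mem_singleton, not_or] at hc
  obtain ⟨hc, hca, hcb⟩ := hc
  have hc' := mem_tn.1 hc
  obtain ⟨e, he⟩ := card_eq_one.1 (one c hc)
  have hce : e ∈ tn G c := by simp [he]
  have hce' := mem_tn.1 hce
  have heh : e ∈ tn G h := tn_sub hG hc'.2 hc'.1.symm hne hce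
  have hea : e ≠ a := by
    rintro rfl
    have : c ∈ tn G e := mem_tn.2 ⟨hce'.1.symm, hc'.2⟩
    rw [hb] at this
    simp at this; exact hcb this
  have heb : e ≠ b := by
    rintro rfl
    have h9 : c ∈ tn G e := mem_tn.2 ⟨hce'.1.symm, hc'.2⟩
    have h10 : a ∈ tn G e := mem_tn.2 ⟨hb'.1.symm, ha'.2⟩
    exact hca (card_le_one.1 (T_tn hG hb'.2) _ h9 _ h10)
  have h4 : ({a, b, c, e} : Finset V) ⊆ tn G h := by
    intro x hx
    simp only [mem_insert, mem_singleton] at hx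
    rcases hx with rfl | rfl | rfl | rfl <;> assumption
  have h5 := card_le_card h4
  have : ({a, b, c, e} : Finset V).card = 4 := by
    rw [card_insert_of_notMem, card_insert_of_notMem, card_insert_of_notMem, card_singleton]
    · simp; exact hce'.1.ne
    · simp; exact ⟨Ne.symm hcb, heb.symm⟩
    · simp; exact ⟨hb'.1.ne, Ne.symm hca, hea.symm⟩
  omega

end

variable (G) in
/-- the (doubled) excess after discharging -/
def w (v : V) : ℤ :=
  if G.degree v = 3 then (hn G v).card - 2 else 4 * G.degree v - 14 - (tn G v).card

theorem sum_w : ∑ v, w G v = 8 * (G.edgeFinset.card : ℤ) - 14 * Fintype.card V := by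
  have hd : ∑ v, (G.degree v : ℤ) = 2 * G.edgeFinset.card := by
    exact_mod_cast G.sum_degrees_eq_twice_card_edges
  have hdc := sum_card_bipartiteAbove_eq_sum_card_bipartiteBelow (G.Adj)
    (s := univ.filter (fun v => G.degree v = 3)) (t := univ.filter (fun v => G.degree v ≠ 3))
  have e1 : ∀ v, bipartiteAbove G.Adj (univ.filter (fun v => G.degree v ≠ 3)) v = hn G v := by
    intro v; ext u; simp [bipartiteAbove, mem_hn, and_comm]
  have e2 : ∀ v, bipartiteBelow G.Adj (univ.filter (fun v => G.degree v = 3)) v = tn G v := by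
    intro v; ext u; simp [bipartiteBelow, mem_tn, and_comm, G.adj_comm]
  simp only [e1, e2] at hdc
  have h1 : ∀ v, w G v = 4 * (G.degree v : ℤ) - 14 + ((if G.degree v = 3 then ((hn G v).card : ℤ) else 0)
      - (if G.degree v ≠ 3 then ((tn G v).card : ℤ) else 0)) := by
    intro v
    unfold w
    by_cases h : G.degree v = 3 <;> simp [h] <;> ring
  simp only [h1]
  rw [sum_add_distrib, sum_sub_distrib, sum_sub_distrib, ← mul_sum, hd, ← sum_filter, ← sum_filter]
  have : (∑ v with G.degree v = 3, ((hn G v).card : ℤ)) = ∑ v with G.degree v ≠ 3, ((tn G v).card : ℤ) := by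
    exact_mod_cast hdc
  rw [this]
  simp
  ring

section
variable (hG : Good G)
include hG

theorem w_ge (v : V) : ((hn G v).card : ℤ) - 2 ≤ w G v := by
  have h3 := three_le hG v
  have := tn_add_hn (G := G) v
  unfold w
  split_ifs <;> omega

theorem w_five (v : V) (h5 : 5 ≤ G.degree v) : ((hn G v).card : ℤ) + 1 ≤ w G v := by
  have := tn_add_hn (G := G) v
  unfold w
  split_ifs <;> omega

theorem w_six (v : V) (h5 : 6 ≤ G.degree v) : 5 ≤ w G v := by
  have := tn_add_hn (G := G) v
  have := hn_pos hG v
  unfold w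
  split_ifs <;> omega

theorem w_nonneg (v : V) : 0 ≤ w G v := by
  have h3 := three_le hG v
  have h1 := w_ge hG v
  rcases (by omega : G.degree v = 3 ∨ G.degree v = 4 ∨ 5 ≤ G.degree v) with h | h | h
  · have := T_hn hG h; omega
  · have := four_hn hG h; omega
  · have := w_five hG v h; omega

theorem sum_le (hw : ∑ v, w G v ≤ 4) (S : Finset V) : ∑ v ∈ S, w G v ≤ 4 :=
  le_trans (sum_le_sum_of_subset_of_nonneg (subset_univ S) (fun v _ _ => w_nonneg hG v)) hw

theorem deg_le (hw : ∑ v, w G v ≤ 4) (v : V) : G.degree v ≤ 5 := by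
  by_contra h
  have h1 := w_six hG v (by omega)
  have h2 := sum_le hG hw {v}
  simp at h2
  omega

theorem mem_of_deg {v : V} {S : Finset V} (hS : ∀ x ∈ S, G.Adj v x) (hd : G.degree v ≤ S.card)
    {q : V} (hq : G.Adj v q) : q ∈ S := by
  have h1 : S ⊆ G.neighborFinset v := fun x hx => by simpa using hS x hx
  have h2 := eq_of_subset_of_card_le h1 (by rwa [G.card_neighborFinset_eq_degree])
  rw [h2]; simpa using hq

theorem le_deg {v : V} {S : Finset V} (hS : ∀ x ∈ S, G.Adj v x) : S.card ≤ G.degree v := by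
  have h1 : S ⊆ G.neighborFinset v := fun x hx => by simpa using hS x hx
  rw [← G.card_neighborFinset_eq_degree]
  exact card_le_card h1

theorem le_hn {v : V} {S : Finset V} (hS : ∀ x ∈ S, G.Adj v x ∧ G.degree x ≠ 3) :
    S.card ≤ (hn G v).card :=
  card_le_card fun x hx => mem_hn.2 (hS x hx)

theorem w_hn {v : V} {S : Finset V} (hS : ∀ x ∈ S, G.Adj v x ∧ G.degree x ≠ 3) :
    (S.card : ℤ) - 2 ≤ w G v := by
  have := le_hn hG hS
  have := w_ge hG v
  omega

theorem card3 {a b c : V} (h1 : a ≠ b) (h2 : a ≠ c) (h3 : b ≠ c) :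
    ({a, b, c} : Finset V).card = 3 := by
  simp [h1, h2, h3]

theorem card4 {a b c d : V} (h1 : a ≠ b) (h2 : a ≠ c) (h3 : b ≠ c) (h4 : a ≠ d) (h5 : b ≠ d)
    (h6 : c ≠ d) : ({a, b, c, d} : Finset V).card = 4 := by
  simp [h1, h2, h3, h4, h5, h6]

/-- two 4-cliques do not share three vertices -/
theorem share3 (hw : ∑ v, w G v ≤ 4) {a b c x y : V} (ab : G.Adj a b) (ac : G.Adj a c)
    (bc : G.Adj b c) (ax : G.Adj a x) (bx : G.Adj b x) (cx : G.Adj c x)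
    (ay : G.Adj a y) (hby : G.Adj b y) (cy : G.Adj c y) (xy : x ≠ y) : False := by
  have ha : G.degree a ≠ 3 := by
    have := le_deg hG (v := a) (S := {b, c, x, y}) (by simp [ab, ac, ax, ay])
    rw [card4 hG bc.ne bx.ne cx.ne hby.ne cy.ne xy] at this
    omega
  have hb : G.degree b ≠ 3 := by
    have := le_deg hG (v := b) (S := {a, c, x, y}) (by simp [ab.symm, bc, bx, hby])
    rw [card4 hG ac.ne ax.ne cx.ne ay.ne cy.ne xy] at this
    omega
  have hc : G.degree c ≠ 3 := by
    have := le_deg hG (v := c) (S := {a, b, x, y}) (by simp [ac.symm, bc.symm, cx, cy])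
    rw [card4 hG ab.ne ax.ne bx.ne ay.ne hby.ne xy] at this
    omega
  have hx1 : 1 ≤ w G x := by
    have := w_hn hG (v := x) (S := {a, b, c}) (by simp [ax.symm, bx.symm, cx.symm, ha, hb, hc])
    rw [card3 hG ab.ne ac.ne bc.ne] at this
    omega
  have hy1 : 1 ≤ w G y := by
    have := w_hn hG (v := y) (S := {a, b, c}) (by simp [ay.symm, hby.symm, cy.symm, ha, hb, hc])
    rw [card3 hG ab.ne ac.ne bc.ne] at this
    omega
  have s5 := sum_le hG hw {a, b, c, x, y}
  rw [sum_insert (by simp [ab.ne, ac.ne, ax.ne, ay.ne]), sum_insert (by simp [bc.ne, bx.ne, hby.ne]),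
    sum_insert (by simp [cx.ne, cy.ne]), sum_insert (by simp [xy]), sum_singleton] at s5
  have na := w_nonneg hG a
  have nb := w_nonneg hG b
  have nc := w_nonneg hG c
  have one : ∀ z, G.Adj a z → G.Adj b z → G.Adj c z → G.degree z ≠ 3 →
      1 ≤ w G a ∧ 1 ≤ w G b ∧ 1 ≤ w G c := by
    intro z az bz cz hz
    have h1 := w_hn hG (v := a) (S := {b, c, z}) (by simp [ab, ac, az, hb, hc, hz])
    have h2 := w_hn hG (v := b) (S := {a, c, z}) (by simp [ab.symm, bc, bz, ha, hc, hz])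
    have h3 := w_hn hG (v := c) (S := {a, b, z}) (by simp [ac.symm, bc.symm, cz, ha, hb, hz])
    rw [card3 hG bc.ne bz.ne cz.ne] at h1
    rw [card3 hG ac.ne az.ne cz.ne] at h2
    rw [card3 hG ab.ne az.ne bz.ne] at h3
    omega
  by_cases hx : G.degree x = 3
  swap
  · have := one x ax bx cx hx; omega
  by_cases hy : G.degree y = 3
  swap
  · have := one y ay hby cy hy; omega
  obtain ⟨p, hp, q, hq, -, hpq⟩ := hG.con ∅ {a, b, c, x, y} (by simp) (by simp) (by simp) (by
    intro hu
    have h8 := hG.big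
    rw [← card_univ, ← hu, union_empty] at h8
    have := card_le_five (a := a) (b := b) (c := c) (d := x) (e := y)
    omega)
  simp only [mem_insert, mem_singleton, not_or] at hp hq
  obtain ⟨qa, qb, qc, qx, qy⟩ := hq
  rcases hp with rfl | rfl | rfl | rfl | rfl
  · have h1 := le_deg hG (v := p) (S := {q, b, c, x, y}) (by simp [ab, ac, ax, ay, hpq])
    rw [card_insert_of_notMem (by simp [*]), card4 hG bc.ne bx.ne cx.ne hby.ne cy.ne xy] at h1
    have h2 := w_five hG p h1
    have h3 := le_hn hG (v := p) (S := {b, c}) (by simp [*])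
    rw [card_pair bc.ne] at h3
    omega
  · have h1 := le_deg hG (v := p) (S := {q, a, c, x, y}) (by simp [ab.symm, bc, bx, hby, hpq])
    rw [card_insert_of_notMem (by simp [*]), card4 hG ac.ne ax.ne cx.ne ay.ne cy.ne xy] at h1
    have h2 := w_five hG p h1
    have h3 := le_hn hG (v := p) (S := {a, c}) (by simp [ab.symm, *])
    rw [card_pair ac.ne] at h3
    omega
  · have h1 := le_deg hG (v := p) (S := {q, a, b, x, y}) (by simp [ac.symm, bc.symm, cx, cy, hpq])
    rw [card_insert_of_notMem (by simp [*]), card4 hG ab.ne ax.ne bx.ne ay.ne hby.ne xy] at h1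
    have h2 := w_five hG p h1
    have h3 := le_hn hG (v := p) (S := {a, b}) (by simp [ac.symm, bc.symm, *])
    rw [card_pair ab.ne] at h3
    omega
  · have := mem_of_deg hG (v := p) (S := {a, b, c}) (by simp [ax.symm, bx.symm, cx.symm])
      (by rw [card3 hG ab.ne ac.ne bc.ne, hx]) hpq
    simp [qa, qb, qc] at this
  · have := mem_of_deg hG (v := p) (S := {a, b, c}) (by simp [ay.symm, hby.symm, cy.symm])
      (by rw [card3 hG ab.ne ac.ne bc.ne, hy]) hpq
    simp [qa, qb, qc] at this

/-- two 4-cliques do not share exactly two vertices -/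
theorem share2 (hw : ∑ v, w G v ≤ 4) {a b x y z t : V} (ab : G.Adj a b)
    (ax : G.Adj a x) (ay : G.Adj a y) (az : G.Adj a z) (hat : G.Adj a t)
    (bx : G.Adj b x) (hby : G.Adj b y) (bz : G.Adj b z) (bt : G.Adj b t)
    (xy : G.Adj x y) (zt : G.Adj z t)
    (xz : x ≠ z) (xt : x ≠ t) (yz : y ≠ z) (yt : y ≠ t) : False := by
  have c4 := card4 hG xy.ne xz yz xt yt zt.ne
  have da := le_deg hG (v := a) (S := {b, x, y, z, t}) (by simp [*])
  have db := le_deg hG (v := b) (S := {a, x, y, z, t}) (by simp [ab.symm, *])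
  have ca : ({b, x, y, z, t} : Finset V).card = 5 := by
    rw [card_insert_of_notMem (by simp [bx.ne, hby.ne, bz.ne, bt.ne]), c4]
  have cb : ({a, x, y, z, t} : Finset V).card = 5 := by
    rw [card_insert_of_notMem (by simp [ax.ne, ay.ne, az.ne, hat.ne]), c4]
  have wa := w_five hG a (by omega)
  have wb := w_five hG b (by omega)
  have s2 := sum_le hG hw {a, b}
  rw [sum_pair ab.ne] at s2
  have ha := hn_pos hG a
  have hb := hn_pos hG b
  have hba : b ∈ hn G a := mem_hn.2 ⟨ab, by omega⟩
  have h3 : ∀ v, G.Adj a v → v ≠ b → G.degree v = 3 := by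
    intro v hv hvb
    by_contra h
    exact hvb (card_le_one.1 (show (hn G a).card ≤ 1 by omega) _ (mem_hn.2 ⟨hv, h⟩) _ hba)
  have hx := h3 x ax bx.ne'
  have hy := h3 y ay hby.ne'
  have hz := h3 z az bz.ne'
  have ht := h3 t hat bt.ne'
  have d5a := deg_le hG hw a
  have d5b := deg_le hG hw b
  obtain ⟨p, hp, q, hq, -, hpq⟩ := hG.con ∅ {a, b, x, y, z, t} (by simp) (by simp) (by simp) (by
    intro hu
    have h8 := hG.big
    rw [← card_univ, ← hu, union_empty] at h8
    have := card_le_six (a := a) (b := b) (c := x) (d := y) (e := z) (f := t)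
    omega)
  simp only [mem_insert, mem_singleton, not_or] at hp hq
  obtain ⟨qa, qb, qx, qy, qz, qt⟩ := hq
  rcases hp with rfl | rfl | rfl | rfl | rfl | rfl
  · have := mem_of_deg hG (v := p) (S := {b, x, y, z, t}) (by simp [*]) (by omega) hpq
    simp [*] at this
  · have := mem_of_deg hG (v := p) (S := {a, x, y, z, t}) (by simp [ab.symm, *]) (by omega) hpq
    simp [*] at this
  · have := mem_of_deg hG (v := p) (S := {a, b, y}) (by simp [ax.symm, bx.symm, *])
      (by rw [card3 hG ab.ne ay.ne hby.ne, hx]) hpq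
    simp [*] at this
  · have := mem_of_deg hG (v := p) (S := {a, b, x}) (by simp [ay.symm, hby.symm, xy.symm])
      (by rw [card3 hG ab.ne ax.ne bx.ne, hy]) hpq
    simp [*] at this
  · have := mem_of_deg hG (v := p) (S := {a, b, t}) (by simp [az.symm, bz.symm, *])
      (by rw [card3 hG ab.ne hat.ne bt.ne, hz]) hpq
    simp [*] at this
  · have := mem_of_deg hG (v := p) (S := {a, b, z}) (by simp [hat.symm, bt.symm, zt.symm])
      (by rw [card3 hG ab.ne az.ne bz.ne, ht]) hpq
    simp [*] at this

theorem clique_adj {Q : Finset V} (hQ : G.IsNClique 4 Q) {x y : V} (hx : x ∈ Q) (hy : y ∈ Q)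
    (h : x ≠ y) : G.Adj x y := hQ.isClique (by simpa using hx) (by simpa using hy) h

theorem exists_clique (hw : ∑ v, w G v ≤ 4) (v : V) : ∃ Q, G.IsNClique 4 Q ∧ v ∈ Q := by
  have mk : ∀ (u : V) (C : Finset V), C ⊆ G.neighborFinset u → C.card = 3 →
      (∀ x ∈ C, 2 ≤ (C.filter (G.Adj x)).card) → G.IsNClique 4 (insert u C) := by
    intro u C hC h3 h2
    have : G.IsNClique 3 C := ⟨fun x hx y hy hxy => clique_C hG h3 h2 (by simpa using hx) (by simpa using hy) hxy, h3⟩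
    exact this.insert (fun b hb => by simpa using hC hb)
  have mkT : ∀ u, G.degree u = 3 → G.IsNClique 4 (insert u (G.neighborFinset u)) := by
    intro u hu
    have : G.IsNClique 3 (G.neighborFinset u) :=
      ⟨fun x hx y hy hxy => T_clique hG hu (by simpa using hx) (by simpa using hy) hxy,
        by rw [G.card_neighborFinset_eq_degree, hu]⟩
    exact this.insert (fun b hb => by simpa using hb)
  by_contra hno
  push Not at hno
  have hall : ∀ u, G.Adj v u → G.degree u ≠ 3 := fun u hu h3 =>
    hno _ (mkT u h3) (by simp [hu.symm])
  have hv3 : G.degree v ≠ 3 := fun h => hno _ (mkT v h) (by simp)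
  have hge := three_le hG v
  have hN := G.card_neighborFinset_eq_degree v
  have hhn := le_hn hG (v := v) (S := G.neighborFinset v)
    (fun x hx => by have := (mem_neighborFinset ..).1 hx; exact ⟨this, hall x this⟩)
  have s1 := sum_le hG hw {v}
  rw [sum_singleton] at s1
  have h4 : G.degree v = 4 := by
    by_contra h
    have := w_five hG v (by omega)
    omega
  obtain ⟨C, hC, hne, h2⟩ := hG.cyc v
  have c3 := card_C (v := v) hG hne h2
  have c3' : C.card ≠ 3 := fun h => hno _ (mk v C hC h h2) (by simp)
  have hCN : C = G.neighborFinset v := eq_of_subset_of_card_le hC (by omega)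
  have hone : ∀ x ∈ C, 1 ≤ w G x := by
    intro x hx
    have hvx : G.Adj v x := by simpa using hC hx
    have h5 := w_hn hG (v := x) (S := insert v (C.filter (G.Adj x))) (by
      intro y hy
      rw [mem_insert, mem_filter] at hy
      rcases hy with rfl | ⟨hy, hxy⟩
      · exact ⟨hvx.symm, hv3⟩
      · exact ⟨hxy, hall y (by simpa using hC hy)⟩)
    have hvC : v ∉ C := fun h => by simpa using hC h
    rw [card_insert_of_notMem (by simp [hvC])] at h5
    have := h2 x hx
    omega
  have hvC : v ∉ C := fun h => by simpa using hC h
  have s5 := sum_le hG hw (insert v C)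
  rw [sum_insert hvC] at s5
  have h6 : C.card • (1 : ℤ) ≤ ∑ x ∈ C, w G x := card_nsmul_le_sum C (w G) 1 hone
  have h7 := w_ge hG v
  have h8 : C.card = 4 := by rw [hCN, hN, h4]
  rw [h8] at h6
  simp at h6
  omega

theorem unique_clique (hw : ∑ v, w G v ≤ 4) (v : V) {Q R : Finset V} (hQ : G.IsNClique 4 Q)
    (hR : G.IsNClique 4 R) (hvQ : v ∈ Q) (hvR : v ∈ R) : Q = R := by
  by_contra hne
  have adQ := fun x y => clique_adj hG hQ (x := x) (y := y)
  have adR := fun x y => clique_adj hG hR (x := x) (y := y)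
  have cQ := hQ.card_eq
  have cR := hR.card_eq
  have e1 := card_sdiff_add_card_inter Q R
  have e2 := card_sdiff_add_card_inter R Q
  rw [inter_comm R Q] at e2
  have hpos : 0 < (Q ∩ R).card := card_pos.2 ⟨v, by simp [hvQ, hvR]⟩
  have hlt : (Q ∩ R).card ≠ 4 := by
    intro h
    apply hne
    have h1 : Q ∩ R = Q := eq_of_subset_of_card_le inter_subset_left (by omega)
    have h2 : Q ∩ R = R := eq_of_subset_of_card_le inter_subset_right (by omega)
    rw [← h1, h2]
  rcases (by omega : (Q ∩ R).card = 1 ∨ (Q ∩ R).card = 2 ∨ (Q ∩ R).card = 3) with h | h | h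
  · have h1 := le_deg hG (v := v) (S := (Q ∪ R).erase v) (by
      intro x hx
      rw [mem_erase, mem_union] at hx
      rcases hx with ⟨hx, h | h⟩
      · exact adQ _ _ hvQ h hx.symm
      · exact adR _ _ hvR h hx.symm)
    rw [card_erase_of_mem (by simp [hvQ])] at h1
    have h2 := card_union_add_card_inter Q R
    have := deg_le hG hw v
    omega
  · obtain ⟨a, b, hab, hE⟩ := card_eq_two.1 h
    obtain ⟨x, y, hxy, hX⟩ := card_eq_two.1 (show (Q \ R).card = 2 by omega)
    obtain ⟨z, t, hzt, hZ⟩ := card_eq_two.1 (show (R \ Q).card = 2 by omega)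
    have ma : a ∈ Q ∩ R := by simp [hE]
    have mb : b ∈ Q ∩ R := by simp [hE]
    have mx : x ∈ Q \ R := by simp [hX]
    have my : y ∈ Q \ R := by simp [hX]
    have mz : z ∈ R \ Q := by simp [hZ]
    have mt : t ∈ R \ Q := by simp [hZ]
    rw [mem_inter] at ma mb
    rw [mem_sdiff] at mx my mz mt
    have ne1 : ∀ p q, p ∈ R → q ∉ R → p ≠ q := fun p q hp hq h => hq (h ▸ hp)
    have ne2 : ∀ p q, p ∈ Q → q ∉ Q → p ≠ q := fun p q hp hq h => hq (h ▸ hp)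
    exact share2 hG hw (adQ a b ma.1 mb.1 hab)
      (adQ a x ma.1 mx.1 (ne1 _ _ ma.2 mx.2)) (adQ a y ma.1 my.1 (ne1 _ _ ma.2 my.2))
      (adR a z ma.2 mz.1 (ne2 _ _ ma.1 mz.2)) (adR a t ma.2 mt.1 (ne2 _ _ ma.1 mt.2))
      (adQ b x mb.1 mx.1 (ne1 _ _ mb.2 mx.2)) (adQ b y mb.1 my.1 (ne1 _ _ mb.2 my.2))
      (adR b z mb.2 mz.1 (ne2 _ _ mb.1 mz.2)) (adR b t mb.2 mt.1 (ne2 _ _ mb.1 mt.2))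
      (adQ x y mx.1 my.1 hxy) (adR z t mz.1 mt.1 hzt)
      (ne2 _ _ mx.1 mz.2) (ne2 _ _ mx.1 mt.2) (ne2 _ _ my.1 mz.2) (ne2 _ _ my.1 mt.2)
  · obtain ⟨a, b, c, hab, hac, hbc, hE⟩ := card_eq_three.1 h
    obtain ⟨x, hX⟩ := card_eq_one.1 (show (Q \ R).card = 1 by omega)
    obtain ⟨y, hY⟩ := card_eq_one.1 (show (R \ Q).card = 1 by omega)
    have ma : a ∈ Q ∩ R := by simp [hE]
    have mb : b ∈ Q ∩ R := by simp [hE]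
    have mc : c ∈ Q ∩ R := by simp [hE]
    have mx : x ∈ Q \ R := by simp [hX]
    have my : y ∈ R \ Q := by simp [hY]
    rw [mem_inter] at ma mb mc
    rw [mem_sdiff] at mx my
    have ne1 : ∀ p q, p ∈ R → q ∉ R → p ≠ q := fun p q hp hq h => hq (h ▸ hp)
    have ne2 : ∀ p q, p ∈ Q → q ∉ Q → p ≠ q := fun p q hp hq h => hq (h ▸ hp)
    exact share3 hG hw (adQ a b ma.1 mb.1 hab) (adQ a c ma.1 mc.1 hac) (adQ b c mb.1 mc.1 hbc)
      (adQ a x ma.1 mx.1 (ne1 _ _ ma.2 mx.2)) (adQ b x mb.1 mx.1 (ne1 _ _ mb.2 mx.2))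
      (adQ c x mc.1 mx.1 (ne1 _ _ mc.2 mx.2))
      (adR a y ma.2 my.1 (ne2 _ _ ma.1 my.2)) (adR b y mb.2 my.1 (ne2 _ _ mb.1 my.2))
      (adR c y mc.2 my.1 (ne2 _ _ mc.1 my.2)) (ne2 _ _ mx.1 my.2)

theorem four_dvd (hw : ∑ v, w G v ≤ 4) : 4 ∣ Fintype.card V := by
  choose f hf hvf using exists_clique hG hw
  have h1 := card_eq_sum_card_image f (univ : Finset V)
  have h2 : ∀ q ∈ univ.image f, (univ.filter (fun a => f a = q)).card = 4 := by
    intro q hq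
    obtain ⟨v, -, rfl⟩ := mem_image.1 hq
    rw [← (hf v).card_eq]
    congr 1
    ext u
    simp only [mem_filter, mem_univ, true_and]
    constructor
    · intro h; rw [← h]; exact hvf u
    · intro h; exact unique_clique hG hw u (hf u) (hf v) (hvf u) h
  rw [sum_congr rfl h2] at h1
  rw [card_univ] at h1
  rw [h1]
  simp

theorem lower {n : ℕ} (hn : Fintype.card V = n) :
    (if n % 4 = 0 ∨ n % 4 = 3 then 2 * n - n / 4 else 2 * n + 1 - n / 4) ≤ G.edgeFinset.card := by
  have h1 := sum_w (G := G)
  have h0 : 0 ≤ ∑ v, w G v := sum_nonneg fun v _ => w_nonneg hG v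
  have h4 : ∑ v, w G v ≤ 4 → 4 ∣ n := fun h => hn ▸ four_dvd hG h
  rw [hn] at h1
  by_cases h : ∑ v, w G v ≤ 4
  · have := h4 h
    split_ifs <;> omega
  · split_ifs <;> omega

end
end Stmt6

namespace Stmt6
open Finset SimpleGraph

/-- the extremal graph -/
def X (n : ℕ) : SimpleGraph (Fin n) where
  Adj i j := i ≠ j ∧ (i.1 / 4 = j.1 / 4 ∨ (n ≤ i.1 + 4 ∧ n ≤ j.1 + 4) ∨ j.1 = i.1 + 1 ∨
    i.1 = j.1 + 1 ∨ (i.1 = 0 ∧ j.1 + 1 = n) ∨ (j.1 = 0 ∧ i.1 + 1 = n))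
  symm := ⟨fun i j h => ⟨h.1.symm, by omega⟩⟩
  loopless := ⟨fun i h => h.1 rfl⟩

theorem X_adj {n : ℕ} {i j : Fin n} : (X n).Adj i j ↔ i.1 ≠ j.1 ∧ (i.1 / 4 = j.1 / 4 ∨
    (n ≤ i.1 + 4 ∧ n ≤ j.1 + 4) ∨ j.1 = i.1 + 1 ∨
    i.1 = j.1 + 1 ∨ (i.1 = 0 ∧ j.1 + 1 = n) ∨ (j.1 = 0 ∧ i.1 + 1 = n)) := by
  simp [X, Fin.ext_iff]

theorem not_acyclic_of_triangle {V : Type*} {G : SimpleGraph V} {a b c : V} (ab : G.Adj a b)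
    (bc : G.Adj b c) (ca : G.Adj c a) : ¬ G.IsAcyclic := by
  intro h
  apply h (Walk.cons ab (Walk.cons bc (Walk.cons ca Walk.nil)))
  simp [Walk.cons_isCycle_iff, Walk.cons_isPath_iff, ab.ne, ab.ne', bc.ne, ca.ne, ca.ne']

theorem X_local (n : ℕ) (h8 : 8 ≤ n) : LocallyNonforesty (X n) := by
  intro v
  obtain ⟨a, b, c, ha, hb, hc, hab, hbc, hca⟩ : ∃ a b c : Fin n, (X n).Adj v a ∧ (X n).Adj v b ∧
      (X n).Adj v c ∧ (X n).Adj a b ∧ (X n).Adj b c ∧ (X n).Adj c a := by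
    have hv := v.2
    have key : ∃ s, s + 4 ≤ n ∧ s ≤ v.1 ∧ v.1 < s + 4 ∧ (s % 4 = 0 ∨ s + 4 = n) := by
      by_cases h : v.1 / 4 * 4 + 4 ≤ n
      · exact ⟨v.1 / 4 * 4, by omega⟩
      · exact ⟨n - 4, by omega⟩
    obtain ⟨s, h1, h2, h3, h4⟩ := key
    have h5 : ∃ p q r : ℕ, p < 4 ∧ q < 4 ∧ r < 4 ∧ p ≠ q ∧ q ≠ r ∧ r ≠ p ∧ v.1 ≠ s + p ∧
        v.1 ≠ s + q ∧ v.1 ≠ s + r := by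
      rcases (by omega : v.1 = s ∨ v.1 = s + 1 ∨ v.1 = s + 2 ∨ v.1 = s + 3) with h | h | h | h
      · exact ⟨1, 2, 3, by omega⟩
      · exact ⟨0, 2, 3, by omega⟩
      · exact ⟨0, 1, 3, by omega⟩
      · exact ⟨0, 1, 2, by omega⟩
    obtain ⟨p, q, r, hp, hq, hr, h⟩ := h5
    refine ⟨⟨s + p, by omega⟩, ⟨s + q, by omega⟩, ⟨s + r, by omega⟩, ?_⟩
    simp only [X_adj]
    rcases h4 with h4 | h4
    · refine ⟨⟨?_, Or.inl ?_⟩, ⟨?_, Or.inl ?_⟩, ⟨?_, Or.inl ?_⟩, ⟨?_, Or.inl ?_⟩,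
        ⟨?_, Or.inl ?_⟩, ⟨?_, Or.inl ?_⟩⟩ <;> omega
    · refine ⟨⟨?_, Or.inr (Or.inl ?_)⟩, ⟨?_, Or.inr (Or.inl ?_)⟩, ⟨?_, Or.inr (Or.inl ?_)⟩,
        ⟨?_, Or.inr (Or.inl ?_)⟩, ⟨?_, Or.inr (Or.inl ?_)⟩, ⟨?_, Or.inr (Or.inl ?_)⟩⟩ <;> omega
  exact not_acyclic_of_triangle (G := (X n).induce ((X n).neighborSet v))
    (a := ⟨a, ha⟩) (b := ⟨b, hb⟩) (c := ⟨c, hc⟩) hab hbc hca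

theorem X_reach {n : ℕ} (S : Finset (Fin n)) (d i : ℕ) (hi : i + d < n)
    (h : ∀ k (hk : k < n), i ≤ k → k ≤ i + d → (⟨k, hk⟩ : Fin n) ∈ ((↑S : Set (Fin n))ᶜ)) :
    ((X n).induce ((↑S : Set (Fin n))ᶜ)).Reachable
      ⟨⟨i, by omega⟩, h i (by omega) (by omega) (by omega)⟩
      ⟨⟨i + d, hi⟩, h (i + d) hi (by omega) (by omega)⟩ := by
  induction d with
  | zero => exact Reachable.refl _
  | succ d ih =>
    refine (ih (by omega) (fun k hk h1 h2 => h k hk h1 (by omega))).trans ?_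
    apply Adj.reachable
    change (X n).Adj ⟨i + d, by omega⟩ ⟨i + (d + 1), by omega⟩
    exact X_adj.2 ⟨by simp only; omega, by simp only; omega⟩

theorem X_conn (n : ℕ) (h8 : 8 ≤ n) : KConnected (X n) 2 := by
  refine ⟨by simp; omega, fun S hS => ?_⟩
  have h1 : ∀ x ∈ S, ∀ y ∈ S, x = y := card_le_one.1 (by omega)
  have main : ∀ (u v : Fin n) (hu : u ∈ ((↑S : Set (Fin n))ᶜ)) (hv : v ∈ ((↑S : Set (Fin n))ᶜ)),
      u.1 ≤ v.1 → ((X n).induce ((↑S : Set (Fin n))ᶜ)).Reachable ⟨u, hu⟩ ⟨v, hv⟩ := by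
    intro u v hu hv huv
    have reach : ∀ (a b : Fin n) (ha : a ∈ ((↑S : Set (Fin n))ᶜ)) (hb : b ∈ ((↑S : Set (Fin n))ᶜ)),
        a.1 ≤ b.1 → (∀ k : Fin n, a.1 ≤ k.1 → k.1 ≤ b.1 → k ∈ ((↑S : Set (Fin n))ᶜ)) →
        ((X n).induce ((↑S : Set (Fin n))ᶜ)).Reachable ⟨a, ha⟩ ⟨b, hb⟩ := by
      intro a b ha hb hab hk
      have := X_reach S (b.1 - a.1) a.1 (by omega) (fun k hk' h1 h2 => hk _ h1 (by simp only; omega))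
      have e : (⟨a.1 + (b.1 - a.1), by omega⟩ : Fin n) = b := Fin.ext (by simp only; omega)
      simp only [e] at this
      exact this
    by_cases hc : ∀ k : Fin n, u.1 ≤ k.1 → k.1 ≤ v.1 → k ∈ ((↑S : Set (Fin n))ᶜ)
    · exact reach u v hu hv huv hc
    · push Not at hc
      obtain ⟨k, hk1, hk2, hk⟩ := hc
      have hkS : k ∈ S := by simpa using hk
      have huk : u ≠ k := fun h => hu (by simpa [h] using hkS)
      have hvk : v ≠ k := fun h => hv (by simpa [h] using hkS)
      have huk' : u.1 ≠ k.1 := fun h => huk (Fin.ext h)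
      have hvk' : v.1 ≠ k.1 := fun h => hvk (Fin.ext h)
      have out : ∀ m : Fin n, m.1 ≠ k.1 → m ∈ ((↑S : Set (Fin n))ᶜ) := by
        intro m hm hmS
        exact hm (congrArg _ (h1 m (by simpa using hmS) k hkS))
      have hv2 := v.2
      have h0 := out ⟨0, by omega⟩ (by simp only; omega)
      have hl := out ⟨n - 1, by omega⟩ (by simp only; omega)
      have r1 := reach _ u h0 hu (by simp) (fun m _ hm => out m (by omega))
      have r2 := reach v _ hv hl (by simp only; omega) (fun m hm _ => out m (by omega))
      refine r1.symm.trans (Reachable.trans (Adj.reachable ?_) r2.symm)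
      change (X n).Adj ⟨0, by omega⟩ ⟨n - 1, by omega⟩
      have hn1 : n - 1 + 1 = n := by omega
      exact X_adj.2 ⟨by simp only; omega, Or.inr (Or.inr (Or.inr (Or.inr (Or.inl ⟨rfl, hn1⟩))))⟩
  have hne : ∃ x : Fin n, x ∉ S := by
    by_contra hall
    push Not at hall
    have := card_le_card (fun x _ => hall x : (univ : Finset (Fin n)) ⊆ S)
    simp at this
    omega
  obtain ⟨x, hx⟩ := hne
  have : Nonempty ↑((↑S : Set (Fin n))ᶜ) := ⟨⟨x, by simpa using hx⟩⟩
  refine Connected.mk ?_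
  intro u v
  rcases le_total u.1.1 v.1.1 with h | h
  · exact main u.1 v.1 u.2 v.2 h
  · exact (main v.1 u.1 v.2 u.2 h).symm

/-- edge pattern of one block with its connecting edge -/
def P : Finset (ℕ × ℕ) := {(0, 1), (0, 2), (0, 3), (1, 2), (1, 3), (2, 3), (3, 4)}

/-- edges of the final clique outside the full blocks -/
def R (r : ℕ) : Finset (ℕ × ℕ) := (range 4 ×ˢ range 4).filter (fun p => p.1 < p.2 ∧ 4 ≤ p.2 + r)

/-- list of edges -/
def F (n : ℕ) : Finset (Sym2 ℕ) :=
  ((range (n / 4)) ×ˢ P).image (fun q => if q.2.2 = 4 ∧ q.1 + 1 = n / 4 then s(0, n - 1)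
    else s(4 * q.1 + q.2.1, 4 * q.1 + q.2.2)) ∪
  (R (n % 4)).image (fun p => s(n - 4 + p.1, n - 4 + p.2))

theorem F_card (n : ℕ) (h8 : 8 ≤ n) : (F n).card ≤
    (if n % 4 = 0 ∨ n % 4 = 3 then 2 * n - n / 4 else 2 * n + 1 - n / 4) := by
  have h1 : (F n).card ≤ (n / 4) * 7 + (R (n % 4)).card := by
    refine (card_union_le _ _).trans (add_le_add (card_image_le.trans ?_) card_image_le)
    rw [card_product, card_range]
    exact le_of_eq rfl
  have r0 : (R 0).card = 0 := by decide
  have r1 : (R 1).card = 3 := by decide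
  have r2 : (R 2).card = 5 := by decide
  have r3 : (R 3).card = 6 := by decide
  rcases (by omega : n % 4 = 0 ∨ n % 4 = 1 ∨ n % 4 = 2 ∨ n % 4 = 3) with h | h | h | h <;>
    rw [h] at h1 ⊢ <;> simp <;> omega

theorem mem_P {a b : ℕ} (hab : a < b) (hb : b < 4) : (a, b) ∈ P := by
  have : a < 4 := by omega
  interval_cases b <;> interval_cases a <;> simp [P] at *

theorem mem_F {n i j : ℕ} (h8 : 8 ≤ n) (hij : i < j) (hj : j < n)
    (h : i / 4 = j / 4 ∨ (n ≤ i + 4 ∧ n ≤ j + 4) ∨ j = i + 1 ∨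
    i = j + 1 ∨ (i = 0 ∧ j + 1 = n) ∨ (j = 0 ∧ i + 1 = n)) : s(i, j) ∈ F n := by
  unfold F
  rw [mem_union]
  by_cases hE : n ≤ i + 4 ∧ n / 4 * 4 ≤ j
  · right
    rw [mem_image]
    refine ⟨(i - (n - 4), j - (n - 4)), ?_, ?_⟩
    · simp only [R, mem_filter, mem_product, mem_range]; omega
    · simp only
      rw [show n - 4 + (i - (n - 4)) = i by omega, show n - 4 + (j - (n - 4)) = j by omega]
  · left
    rw [mem_image]
    by_cases hb : i / 4 = j / 4
    · refine ⟨(i / 4, (i % 4, j % 4)), ?_, ?_⟩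
      · rw [mem_product, mem_range]
        refine ⟨by simp only; omega, mem_P (by omega) (by omega)⟩
      · rw [if_neg (by simp only; omega)]
        simp only
        rw [show 4 * (i / 4) + i % 4 = i by omega, show 4 * (i / 4) + j % 4 = j by omega]
    · by_cases hc : i = 0 ∧ j + 1 = n
      · refine ⟨(n / 4 - 1, (3, 4)), ?_, ?_⟩
        · rw [mem_product, mem_range]
          exact ⟨by simp only; omega, by simp [P]⟩
        · have h1 : n / 4 - 1 + 1 = n / 4 := by omega
          have h2 : n - 1 = j := by omega
          rw [if_pos ⟨rfl, h1⟩, hc.1, h2]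
      · refine ⟨(i / 4, (3, 4)), ?_, ?_⟩
        · rw [mem_product, mem_range]
          exact ⟨by simp only; omega, by simp [P]⟩
        · rw [if_neg (by simp only; omega)]
          simp only
          have hji : j = i + 1 := by omega
          rw [show 4 * (i / 4) + 3 = i by omega, show 4 * (i / 4) + 4 = j by omega]

theorem X_card (n : ℕ) (h8 : 8 ≤ n) : (X n).edgeSet.ncard ≤
    (if n % 4 = 0 ∨ n % 4 = 3 then 2 * n - n / 4 else 2 * n + 1 - n / 4) := by
  refine le_trans ?_ (F_card n h8)
  rw [← Set.ncard_image_of_injective _ (Sym2.map.injective (Fin.val_injective (n := n))),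
    ← Set.ncard_coe_finset]
  apply Set.ncard_le_ncard _ (Set.toFinite _)
  rintro _ ⟨e, he, rfl⟩
  induction e using Sym2.ind with
  | _ i j =>
    rw [mem_edgeSet, X_adj] at he
    rw [Sym2.map_mk, mem_coe]
    rcases lt_or_gt_of_ne he.1 with h | h
    · exact mem_F h8 h j.2 he.2
    · have := mem_F h8 h i.2 (by omega)
      rw [Sym2.eq_swap] at this
      exact this

end Stmt6

/-- `g n` is the least possible size: it is attained by some 2-connected locally
nonforesty graph of order `n`, and it is a lower bound for the sizes of all such graphs. -/
theorem stmt_6 (n : ℕ) (h8 : 8 ≤ n) :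
    IsLeast {m : ℕ | ∃ G : SimpleGraph (Fin n),
        KConnected G 2 ∧ LocallyNonforesty G ∧ G.edgeSet.ncard = m}
      (if n % 4 = 0 ∨ n % 4 = 3 then 2 * n - n / 4 else 2 * n + 1 - n / 4) := by
  have low : ∀ G : SimpleGraph (Fin n), KConnected G 2 → LocallyNonforesty G →
      (if n % 4 = 0 ∨ n % 4 = 3 then 2 * n - n / 4 else 2 * n + 1 - n / 4) ≤ G.edgeSet.ncard := by
    intro G h1 h2
    classical
    have h3 := Stmt6.lower (Stmt6.good_of (by simpa using h8) h1 h2) (Fintype.card_fin n)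
    rw [← SimpleGraph.coe_edgeFinset, Set.ncard_coe_finset]
    exact h3
  constructor
  · exact ⟨Stmt6.X n, Stmt6.X_conn n h8, Stmt6.X_local n h8,
      le_antisymm (Stmt6.X_card n h8) (low _ (Stmt6.X_conn n h8) (Stmt6.X_local n h8))⟩
  · rintro m ⟨G, h1, h2, rfl⟩
    exact low G h1 h2
end

section
/- For every integer n ≥ 8 there exists a connected locally nonforesty graph of order n whose size equals p(n), where p(n) = 2n − 1 − ⌊n/4⌋ if n ≡ 0 or 3 (mod 4), and p(n) = 2n − ⌊n/4⌋ otherwise. Consequently, the minimum size of a connected locally nonforesty graph of order n is exactly p(n). -/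
open Classical in
/-- Number of ordered pairs in `A × B` that are adjacent. -/
noncomputable def dd {V : Type*} (G : SimpleGraph V) (A B : Finset V) : ℤ :=
  ∑ a ∈ A, ∑ b ∈ B, if G.Adj a b then 1 else 0

section Lower
open Classical
variable {V : Type*} {G : SimpleGraph V}

lemma dd_comm (A B : Finset V) : dd G A B = dd G B A := by
  unfold dd
  rw [Finset.sum_comm]
  simp only [G.adj_comm]

lemma dd_union_left {A A' : Finset V} (B : Finset V) (h : Disjoint A A') :
    dd G (A ∪ A') B = dd G A B + dd G A' B := by
  unfold dd
  rw [Finset.sum_union h]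

lemma dd_union_right {A A' : Finset V} (B : Finset V) (h : Disjoint A A') :
    dd G B (A ∪ A') = dd G B A + dd G B A' := by
  rw [dd_comm, dd_union_left B h, dd_comm, dd_comm A']

lemma dd_nonneg (A B : Finset V) : 0 ≤ dd G A B := by
  unfold dd
  exact Finset.sum_nonneg fun a _ => Finset.sum_nonneg fun b _ => by split_ifs <;> simp

lemma dd_mono {A A' B B' : Finset V} (h : A ⊆ A') (h' : B ⊆ B') : dd G A B ≤ dd G A' B' := by
  rw [← Finset.union_sdiff_of_subset h, ← Finset.union_sdiff_of_subset h',
    dd_union_left _ Finset.disjoint_sdiff, dd_union_right _ Finset.disjoint_sdiff]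
  have := dd_nonneg (G := G) A (B' \ B)
  have := dd_nonneg (G := G) (A' \ A) (B ∪ B' \ B)
  linarith

lemma dd_full {A B : Finset V} (h : ∀ a ∈ A, ∀ b ∈ B, G.Adj a b) :
    dd G A B = A.card * B.card := by
  unfold dd
  rw [Finset.sum_congr rfl fun a ha => Finset.sum_congr rfl fun b hb => if_pos (h a ha b hb)]
  simp

lemma dd_clique {A : Finset V} (h : G.IsClique A) :
    dd G A A = A.card * (A.card - 1) := by
  have : ∀ a ∈ A, (∑ b ∈ A, if G.Adj a b then (1 : ℤ) else 0) = A.card - 1 := by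
    intro a ha
    rw [← Finset.add_sum_erase A _ ha,
      Finset.sum_congr rfl fun b hb => if_pos (h ha (Finset.mem_of_mem_erase hb)
        (Finset.ne_of_mem_erase hb).symm)]
    simp [Finset.card_erase_of_mem ha]
    have := Finset.card_pos.2 ⟨a, ha⟩
    omega
  unfold dd
  rw [Finset.sum_congr rfl this, Finset.sum_const, nsmul_eq_mul]

lemma dd_pos {A B : Finset V} {a b : V} (ha : a ∈ A) (hb : b ∈ B) (h : G.Adj a b) :
    1 ≤ dd G A B := by
  have := dd_mono (G := G) (Finset.singleton_subset_iff.2 ha) (Finset.singleton_subset_iff.2 hb)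
  refine le_trans ?_ this
  rw [dd, Finset.sum_singleton, Finset.sum_singleton, if_pos h]

lemma dd_two {A B : Finset V} {a b a' b' : V} (ha : a ∈ A) (hb : b ∈ B) (h : G.Adj a b)
    (ha' : a' ∈ A) (hb' : b' ∈ B) (h' : G.Adj a' b') (hne : a ≠ a' ∨ b ≠ b') :
    2 ≤ dd G A B := by
  by_cases e : a = a'
  · subst e
    have hb2 : b ≠ b' := by tauto
    have := dd_mono (G := G) (Finset.singleton_subset_iff.2 ha)
      (show ({b, b'} : Finset V) ⊆ B by intro x hx; simp at hx; rcases hx with rfl | rfl <;> assumption)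
    refine le_trans ?_ this
    rw [dd, Finset.sum_singleton, Finset.sum_pair hb2, if_pos h, if_pos h']
    norm_num
  · rw [← Finset.union_sdiff_of_subset (Finset.singleton_subset_iff.2 ha),
      dd_union_left _ Finset.disjoint_sdiff]
    have h1 := dd_pos (Finset.mem_singleton_self a) hb h
    have h2 := dd_pos (A := A \ {a}) (by simp [ha', Ne.symm e]) hb' h'
    linarith

/-- The potential `4 e(T) - 7 |T| + 4`. -/
noncomputable def pot (G : SimpleGraph V) (T : Finset V) : ℤ := 2 * dd G T T - 7 * T.card + 4

lemma pot_union {T R : Finset V} (h : Disjoint T R) :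
    pot G (T ∪ R) = pot G T + 2 * dd G R R + 4 * dd G T R - 7 * R.card := by
  unfold pot
  rw [dd_union_left _ h, dd_union_right _ h, dd_union_right _ h, dd_comm R T,
    Finset.card_union_of_disjoint h]
  push_cast
  ring

/-- Adding a 4-clique meeting `T`. -/
lemma pot_grow_meet {T Q : Finset V} (hQ : G.IsNClique 4 Q) (h1 : (Q ∩ T).Nonempty)
    (h2 : ¬ Q ⊆ T) : pot G T + 3 ≤ pot G (T ∪ Q) := by
  have e : T ∪ Q = T ∪ (Q \ T) := by simp
  rw [e, pot_union Finset.disjoint_sdiff]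
  have hR : G.IsClique (Q \ T : Finset V) := hQ.1.subset (by simp)
  rw [dd_clique hR]
  have hD : dd G (Q ∩ T) (Q \ T) ≤ dd G T (Q \ T) :=
    dd_mono Finset.inter_subset_right (Finset.Subset.refl _)
  rw [dd_full (by
    intro a ha b hb
    simp at ha hb
    exact hQ.1 ha.1 hb.1 (by rintro rfl; exact hb.2 ha.2))] at hD
  have hc := Finset.card_inter_add_card_sdiff Q T
  rw [hQ.2] at hc
  have p1 := Finset.card_pos.2 h1
  have p2 : 0 < (Q \ T).card := Finset.card_pos.2 (Finset.sdiff_nonempty.2 h2)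
  have hi : (Q ∩ T).card = 4 - (Q \ T).card := by omega
  rw [hi] at hD
  have : (Q \ T).card ≤ 3 := by omega
  generalize (Q \ T).card = r at *
  interval_cases r <;> norm_num at * <;> linarith

lemma pot_grow_disj {T Q : Finset V} (hQ : G.IsNClique 4 Q) (h1 : Disjoint T Q) :
    pot G (T ∪ Q) = pot G T + 4 * (dd G T Q - 1) := by
  rw [pot_union h1, dd_clique hQ.1, hQ.2]
  norm_num
  ring

lemma pot_clique {Q : Finset V} (hQ : G.IsNClique 4 Q) : pot G Q = 0 := by
  unfold pot
  rw [dd_clique hQ.1, hQ.2]; norm_num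

/-- growing to the whole vertex set -/
lemma grow_all [Fintype V] (hc : G.Connected) (T : Finset V) (hT : T.Nonempty)
    (hS : ∀ v, v ∉ T → ∃ Q, G.IsNClique 4 Q ∧ v ∈ Q) (hp : pot G T = 0 ∨ 3 ≤ pot G T) :
    pot G Finset.univ = 0 ∨ 3 ≤ pot G Finset.univ := by
  by_cases hu : T = Finset.univ
  · rwa [hu] at hp
  obtain ⟨x, hx⟩ : ∃ x, x ∉ T := by
    by_contra! h
    exact hu (Finset.eq_univ_iff_forall.2 h)
  obtain ⟨t, ht⟩ := hT
  obtain ⟨p⟩ := hc.preconnected t x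
  obtain ⟨d, -, hd1, hd2⟩ := p.exists_boundary_dart (T : Set V) (by simpa) (by simpa)
  obtain ⟨Q, hQ, hdQ⟩ := hS d.snd (by simpa using hd2)
  have hns : ¬ Q ⊆ T := fun h => hd2 (by simpa using h hdQ)
  have hss : T ⊂ T ∪ Q := by
    refine Finset.ssubset_iff_subset_ne.2 ⟨Finset.subset_union_left, fun h => hns ?_⟩
    rw [h]; exact Finset.subset_union_right
  have hlt : (Finset.univ \ (T ∪ Q)).card < (Finset.univ \ T).card := by
    rw [Finset.card_univ_sdiff, Finset.card_univ_sdiff]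
    have := Finset.card_lt_card hss
    have := Finset.card_le_univ (T ∪ Q)
    omega
  refine grow_all hc (T ∪ Q) ⟨t, by simp [ht]⟩ (fun v hv => hS v (by simp at hv; tauto)) ?_
  by_cases hm : (Q ∩ T).Nonempty
  · have := pot_grow_meet hQ hm hns
    omega
  · have hdis : Disjoint T Q := by
      rw [Finset.not_nonempty_iff_eq_empty, Finset.inter_comm] at hm
      exact Finset.disjoint_iff_inter_eq_empty.2 hm
    have := pot_grow_disj hQ hdis
    have := dd_pos (by simpa using hd1) hdQ d.adj
    omega
termination_by (Finset.univ \ T).card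

/-- Closed under 4-cliques, covered by 4-cliques. -/
def Cl (G : SimpleGraph V) (X : Finset V) : Prop :=
  (∀ Q, G.IsNClique 4 Q → (Q ∩ X).Nonempty → Q ⊆ X) ∧ ∀ v ∈ X, ∃ Q, G.IsNClique 4 Q ∧ v ∈ Q

lemma Cl.sdiff {X C : Finset V} (hX : Cl G X) (hC : Cl G C) : Cl G (X \ C) := by
  refine ⟨fun Q hQ hne => ?_, fun v hv => hX.2 v (Finset.mem_sdiff.1 hv).1⟩
  obtain ⟨q, hq⟩ := hne
  simp only [Finset.mem_inter, Finset.mem_sdiff] at hq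
  intro y hy
  rw [Finset.mem_sdiff]
  refine ⟨hX.1 Q hQ ⟨q, by simp [hq]⟩ hy, fun hyC => hq.2.2 ?_⟩
  exact hC.1 Q hQ ⟨y, by simp [hy, hyC]⟩ hq.1

/-- A nonempty closed set contains a nonempty closed set of nonnegative potential. -/
lemma exists_comp {X : Finset V} (hX : Cl G X) (hne : X.Nonempty) :
    ∃ C ⊆ X, C.Nonempty ∧ Cl G C ∧ 0 ≤ pot G C := by
  obtain ⟨x, hx⟩ := hne
  obtain ⟨Q, hQ, hxQ⟩ := hX.2 x hx
  have hQX := hX.1 Q hQ ⟨x, by simp [hx, hxQ]⟩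
  let F := X.powerset.filter fun W => x ∈ W ∧ 0 ≤ pot G W
  obtain ⟨W, hW, hmax⟩ := F.exists_max_image Finset.card
    ⟨Q, by simp [F, hQX, hxQ, pot_clique hQ]⟩
  simp only [F, Finset.mem_filter, Finset.mem_powerset] at hW hmax
  refine ⟨W, hW.1, ⟨x, hW.2.1⟩, ⟨fun P hP hPW => ?_, fun v hv => hX.2 v (hW.1 hv)⟩, hW.2.2⟩
  by_contra hns
  have h1 := pot_grow_meet hP hPW hns
  obtain ⟨q, hq⟩ := hPW
  simp only [Finset.mem_inter] at hq
  have hPX := hX.1 P hP ⟨q, by simp [hq.1, hW.1 hq.2]⟩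
  have := hmax (W ∪ P) ⟨Finset.union_subset hW.1 hPX, by simp [hW.2.1], by omega⟩
  have h2 := Finset.eq_of_subset_of_card_le Finset.subset_union_left this
  apply hns
  rw [h2]; exact Finset.subset_union_right

lemma closed_sum {T X : Finset V} (hX : Cl G X) (hXT : X ⊆ T)
    (h2 : ∀ C ⊆ X, C.Nonempty → Cl G C → 2 ≤ dd G C (T \ C)) :
    0 ≤ 2 * dd G X T - 7 * X.card := by
  by_cases hne : X.Nonempty
  · obtain ⟨C, hCX, hCne, hC, hpC⟩ := exists_comp hX hne
    have hlt : (X \ C).card < X.card := by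
      rw [Finset.card_sdiff_of_subset hCX]
      have := Finset.card_pos.2 hCne
      have := Finset.card_le_card hCX
      omega
    have ih := closed_sum (T := T) (hX.sdiff hC) (Finset.sdiff_subset.trans hXT)
      (fun D hD => h2 D (hD.trans Finset.sdiff_subset))
    have e1 : dd G X T = dd G C T + dd G (X \ C) T := by
      rw [← dd_union_left _ Finset.disjoint_sdiff, Finset.union_sdiff_of_subset hCX]
    have e2 : dd G C T = dd G C C + dd G C (T \ C) := by
      rw [← dd_union_right _ Finset.disjoint_sdiff,
        Finset.union_sdiff_of_subset (hCX.trans hXT)]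
    have e3 : X.card = C.card + (X \ C).card := by
      rw [Finset.card_sdiff_of_subset hCX]
      have := Finset.card_le_card hCX
      omega
    have := h2 C hCX hCne hC
    unfold pot at hpC
    rw [e1, e2, e3]
    push_cast
    linarith
  · rw [Finset.not_nonempty_iff_eq_empty] at hne
    subst hne
    simp [dd]
termination_by X.card

/-- A finite set of minimum degree two. -/
def MinTwo (G : SimpleGraph V) (W : Finset V) : Prop :=
  W.Nonempty ∧ ∀ w ∈ W, ∃ a ∈ W, ∃ b ∈ W, a ≠ b ∧ G.Adj w a ∧ G.Adj w b

lemma exists_minTwo {v : V} (h : ¬ (G.induce (G.neighborSet v)).IsAcyclic) :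
    ∃ W : Finset V, MinTwo G W ∧ ∀ w ∈ W, G.Adj v w := by
  unfold SimpleGraph.IsAcyclic at h
  push Not at h
  obtain ⟨x, c, hc⟩ := h
  refine ⟨c.support.toFinset.image Subtype.val, ⟨⟨x, ?_⟩, ?_⟩, ?_⟩
  · exact Finset.mem_image.2 ⟨x, by simp, rfl⟩
  · intro w hw
    simp only [Finset.mem_image, List.mem_toFinset] at hw
    obtain ⟨w, hw, rfl⟩ := hw
    have := hc.ncard_neighborSet_toSubgraph_eq_two hw
    obtain ⟨a, b, hab, hs⟩ := Set.ncard_eq_two.1 this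
    have ha : c.toSubgraph.Adj w a := by
      have : a ∈ c.toSubgraph.neighborSet w := by rw [hs]; simp
      exact this
    have hb : c.toSubgraph.Adj w b := by
      have : b ∈ c.toSubgraph.neighborSet w := by rw [hs]; simp
      exact this
    refine ⟨a, ?_, b, ?_, ?_, ?_, ?_⟩
    · simp only [Finset.mem_image, List.mem_toFinset]
      exact ⟨a, c.mem_verts_toSubgraph.1 ha.snd_mem, rfl⟩
    · simp only [Finset.mem_image, List.mem_toFinset]
      exact ⟨b, c.mem_verts_toSubgraph.1 hb.snd_mem, rfl⟩
    · exact fun h => hab (Subtype.ext h)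
    · exact ha.adj_sub
    · exact hb.adj_sub
  · intro w hw
    simp only [Finset.mem_image, List.mem_toFinset] at hw
    obtain ⟨w, hw, rfl⟩ := hw
    exact w.2

lemma four_le {v : V} {W : Finset V} (hW : MinTwo G W) (hv : ∀ w ∈ W, G.Adj v w)
    (hU : ¬ ∃ Q, G.IsNClique 4 Q ∧ v ∈ Q) : 4 ≤ W.card := by
  by_contra hlt
  obtain ⟨⟨w, hw⟩, hd⟩ := hW
  obtain ⟨a, ha, b, hb, hab, hwa, hwb⟩ := hd w hw
  have hsub : ({w, a, b} : Finset V) ⊆ W := by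
    intro x hx; simp at hx; rcases hx with rfl | rfl | rfl <;> assumption
  have hc3 : ({w, a, b} : Finset V).card = 3 := Finset.card_eq_three.2
    ⟨w, a, b, hwa.ne, hwb.ne, hab, rfl⟩
  have heq := Finset.eq_of_subset_of_card_le hsub (by omega)
  have hadj : G.Adj a b := by
    obtain ⟨c, hc, d, hd, hcd, hac, had⟩ := hd a ha
    rw [← heq] at hc hd
    simp at hc hd
    rcases hc with rfl | rfl | rfl
    · rcases hd with rfl | rfl | rfl
      · exact absurd rfl hcd
      · exact absurd had (G.irrefl)
      · exact had
    · exact absurd hac (G.irrefl)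
    · exact hac
  refine hU ⟨{v, w, a, b}, ?_, by simp⟩
  have h3 : G.IsNClique 3 {w, a, b} := SimpleGraph.is3Clique_triple_iff.2 ⟨hwa, hwb, hadj⟩
  exact h3.insert (by simpa using ⟨hv w hw, hv a ha, hv b hb⟩)

lemma pot_univ [Fintype V] (hc : G.Connected) (hG : LocallyNonforesty G) :
    pot G Finset.univ = 0 ∨ 3 ≤ pot G Finset.univ := by
  obtain ⟨v0⟩ := hc.nonempty
  let S : Finset V := Finset.univ.filter fun v => ∃ Q, G.IsNClique 4 Q ∧ v ∈ Q
  by_cases hU : ∀ v, v ∈ S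
  · obtain ⟨Q, hQ, hvQ⟩ := (Finset.mem_filter.1 (hU v0)).2
    exact grow_all hc Q ⟨v0, hvQ⟩ (fun v _ => (Finset.mem_filter.1 (hU v)).2)
      (Or.inl (pot_clique hQ))
  push Not at hU
  obtain ⟨u0, hu0⟩ := hU
  let Pr : Finset V → Prop := fun X => Cl G X ∧
    ∀ u ∉ S, ∃ W : Finset V, MinTwo G W ∧ (∀ w ∈ W, G.Adj u w) ∧ W ⊆ Sᶜ ∪ X
  have hPS : Pr S := by
    refine ⟨⟨fun Q hQ _ q hq => ?_, fun v hv => (Finset.mem_filter.1 hv).2⟩, fun u _ => ?_⟩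
    · simp only [S, Finset.mem_filter, Finset.mem_univ, true_and]
      exact ⟨Q, hQ, hq⟩
    · obtain ⟨W, h1, h2⟩ := exists_minTwo (hG u)
      refine ⟨W, h1, h2, fun w _ => ?_⟩
      simp only [Finset.mem_union, Finset.mem_compl]
      tauto
  obtain ⟨X, hX, hmin⟩ := (Finset.univ.filter Pr).exists_min_image Finset.card ⟨S, by simp [hPS]⟩
  simp only [Finset.mem_filter, Finset.mem_univ, true_and] at hX hmin
  have hXS : X ⊆ S := by
    intro x hx
    simp only [S, Finset.mem_filter, Finset.mem_univ, true_and]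
    exact hX.1.2 x hx
  have hdis : Disjoint Sᶜ X := by
    rw [Finset.disjoint_left]
    intro a ha hx
    exact (Finset.mem_compl.1 ha) (hXS hx)
  obtain ⟨T, hT⟩ : ∃ T, T = Sᶜ ∪ X := ⟨_, rfl⟩
  have key : ∀ C ⊆ X, C.Nonempty → Cl G C → 2 ≤ dd G C (T \ C) := by
    intro C hCX hCne hC
    by_contra hlt
    have hnew : Pr (X \ C) := by
      refine ⟨hX.1.sdiff hC, fun u hu => ?_⟩
      obtain ⟨W, hW, hWu, hWT⟩ := hX.2 u hu
      refine ⟨W, hW, hWu, fun w hw => ?_⟩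
      rw [← hT] at hWT
      have hwT := hWT hw
      have hwC : w ∉ C := by
        intro hwC
        apply hlt
        have huT : u ∈ T \ C := by
          simp only [hT, Finset.mem_sdiff, Finset.mem_union, Finset.mem_compl]
          exact ⟨Or.inl hu, fun h => hu (hXS (hCX h))⟩
        obtain ⟨a, ha, -, -, -, hwa, -⟩ := hW.2 w hw
        by_cases haC : a ∈ C
        · exact dd_two hwC huT (hWu w hw).symm haC huT (hWu a ha).symm (Or.inl hwa.ne)
        · exact dd_two hwC huT (hWu w hw).symm hwC (Finset.mem_sdiff.2 ⟨hWT ha, haC⟩) hwa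
            (Or.inr (hWu a ha).ne)
      simp only [hT, Finset.mem_union, Finset.mem_sdiff] at hwT ⊢
      tauto
    have h1 := hmin _ hnew
    rw [Finset.card_sdiff_of_subset hCX] at h1
    have := Finset.card_pos.2 hCne
    have := Finset.card_le_card hCX
    omega
  have hsum := closed_sum hX.1 (hT ▸ Finset.subset_union_right : X ⊆ T) key
  have hUdeg : 4 * ((Sᶜ).card : ℤ) ≤ dd G Sᶜ T := by
    unfold dd
    rw [mul_comm, ← nsmul_eq_mul]
    refine Finset.card_nsmul_le_sum _ _ _ fun u hu => ?_
    have hu' := Finset.mem_compl.1 hu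
    obtain ⟨W, hW, hWu, hWT⟩ := hX.2 u hu'
    rw [← hT] at hWT
    have h4 := four_le hW hWu (by simpa [S] using hu')
    have h5 := dd_mono (G := G) (Finset.Subset.refl {u}) hWT
    rw [dd_full (A := {u}) (B := W) (by simpa using hWu)] at h5
    simp only [dd, Finset.sum_singleton, Finset.card_singleton] at h5
    push_cast at h5
    omega
  have hUpos : 0 < (Sᶜ).card := Finset.card_pos.2 ⟨u0, Finset.mem_compl.2 hu0⟩
  have hpT : 3 ≤ pot G T := by
    unfold pot
    have e : dd G T T = dd G Sᶜ T + dd G X T := by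
      conv_lhs => rw [hT]
      rw [dd_union_left _ hdis, ← hT]
    have e2 : T.card = (Sᶜ).card + X.card := by rw [hT, Finset.card_union_of_disjoint hdis]
    rw [e, e2]
    push_cast
    omega
  refine grow_all hc T ⟨u0, by simp [hT, hu0]⟩ (fun v hv => ?_) (Or.inr hpT)
  simp only [hT, Finset.mem_union, Finset.mem_compl] at hv
  have : v ∈ S := by tauto
  exact (Finset.mem_filter.1 this).2

lemma dd_univ [Fintype V] : dd G Finset.univ Finset.univ = 2 * (G.edgeSet.ncard : ℤ) := by
  have h := G.sum_degrees_eq_twice_card_edges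
  have e : G.edgeSet.ncard = G.edgeFinset.card := by
    rw [← SimpleGraph.coe_edgeFinset, Set.ncard_coe_finset]
  rw [e]
  have h' : ((∑ v, G.degree v : ℕ) : ℤ) = 2 * (G.edgeFinset.card : ℤ) := by
    rw [h]; push_cast; ring
  rw [← h']
  unfold dd
  push_cast
  refine Finset.sum_congr rfl fun v _ => ?_
  rw [← SimpleGraph.card_neighborFinset_eq_degree, SimpleGraph.neighborFinset_eq_filter]
  simp

end Lower

section Upper

/-- There is a connected graph of order `n`, size `m`, all vertices of which lie in 4-cliques. -/
def Constr (n m : ℕ) : Prop := ∃ G : SimpleGraph (Fin n), G.Connected ∧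
  (∀ v, ∃ a b c, G.Adj v a ∧ G.Adj v b ∧ G.Adj v c ∧ G.Adj a b ∧ G.Adj a c ∧ G.Adj b c) ∧
  G.edgeSet.ncard = m

lemma lnf_of_cliques {V : Type*} {G : SimpleGraph V}
    (h : ∀ v, ∃ a b c, G.Adj v a ∧ G.Adj v b ∧ G.Adj v c ∧ G.Adj a b ∧ G.Adj a c ∧ G.Adj b c) :
    LocallyNonforesty G := by
  classical
  intro v hac
  obtain ⟨a, b, c, ha, hb, hc, hab, hac', hbc⟩ := h v
  have h3 : (G.induce (G.neighborSet v)).IsNClique 3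
      {(⟨a, ha⟩ : G.neighborSet v), ⟨b, hb⟩, ⟨c, hc⟩} :=
    SimpleGraph.is3Clique_triple_iff.2 ⟨hab, hac', hbc⟩
  obtain ⟨u, w, hw, -⟩ := SimpleGraph.is3Clique_iff_exists_cycle_length_three.1 ⟨_, h3⟩
  exact hac w hw

lemma constr_base {n : ℕ} (r : Fin n → Fin n → Bool) (hs : ∀ a b, r a b = r b a)
    (hi : ∀ a, r a a = false) (u : Fin n) (hu : ∀ a, a ≠ u → r u a = true)
    (hq : ∀ v, ∃ a b c, r v a = true ∧ r v b = true ∧ r v c = true ∧ r a b = true ∧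
      r a c = true ∧ r b c = true) (m : ℕ)
    (hm : (∑ a, ∑ b, if r a b = true then 1 else 0) = 2 * m) : Constr n m := by
  classical
  let G : SimpleGraph (Fin n) :=
    { Adj := fun a b => r a b = true
      symm := ⟨fun a b h => by rw [hs]; exact h⟩
      loopless := ⟨fun a h => by rw [hi] at h; exact absurd h (by simp)⟩ }
  refine ⟨G, ?_, hq, ?_⟩
  · rw [SimpleGraph.connected_iff_exists_forall_reachable]
    refine ⟨u, fun w => ?_⟩
    by_cases h : w = u
    · subst h; exact SimpleGraph.Reachable.refl _
    · exact SimpleGraph.Adj.reachable (hu w h)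
  · have h1 := dd_univ (G := G)
    have h2 : dd G Finset.univ Finset.univ =
        ((∑ a, ∑ b, if r a b = true then 1 else 0 : ℕ) : ℤ) := by
      unfold dd
      push_cast
      refine Finset.sum_congr rfl fun a _ => Finset.sum_congr rfl fun b _ => ?_
      by_cases h : r a b = true
      · rw [if_pos h, if_pos (show G.Adj a b from h)]
      · rw [if_neg h, if_neg (show ¬ G.Adj a b from h)]
    rw [h2, hm] at h1
    push_cast at h1
    omega

lemma constr4 : Constr 4 6 :=
  constr_base (fun a b => decide (a ≠ b)) (by decide) (by decide) 0 (by decide) (by decide) 6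
    (by decide)

lemma constr5 : Constr 5 9 :=
  constr_base (fun a b => decide (a ≠ b ∧ a.val + b.val ≠ 1)) (by decide) (by decide) 4
    (by decide) (by decide) 9 (by decide)

lemma constr6 : Constr 6 11 :=
  constr_base (fun a b => decide (a ≠ b ∧ (4 ≤ a.val ∨ 4 ≤ b.val ∨ a.val / 2 = b.val / 2)))
    (by decide) (by decide) 4 (by decide) (by decide) 11 (by decide)

lemma constr7 : Constr 7 12 :=
  constr_base (fun a b => decide (a ≠ b ∧ (a.val = 6 ∨ b.val = 6 ∨ a.val / 3 = b.val / 3)))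
    (by decide) (by decide) 6 (by decide) (by decide) 12 (by decide)

lemma constr_step {n m : ℕ} (h : Constr n m) : Constr (n + 4) (m + 7) := by
  classical
  obtain ⟨G, hc, hq, hm⟩ := h
  obtain ⟨v0⟩ := hc.nonempty
  let K : SimpleGraph (Fin 4) := ⊤
  let H := G.sum K ⊔ SimpleGraph.edge (Sum.inl v0) (Sum.inr 0)
  have hH : H.Connected := hc.sum_sup_edge SimpleGraph.connected_top
  let e : H ≃g H.map (finSumFinEquiv (m := n) (n := 4)).toEmbedding :=
    SimpleGraph.Iso.map finSumFinEquiv H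
  have hl : ∀ a b, G.Adj a b → H.Adj (Sum.inl a) (Sum.inl b) := fun a b h => Or.inl h
  have hr : ∀ a b, K.Adj a b → H.Adj (Sum.inr a) (Sum.inr b) := fun a b h => Or.inl h
  refine ⟨_, e.connected_iff.1 hH, fun v => ?_, ?_⟩
  · suffices h : ∀ v, ∃ a b c, H.Adj v a ∧ H.Adj v b ∧ H.Adj v c ∧ H.Adj a b ∧ H.Adj a c ∧
        H.Adj b c by
      obtain ⟨a, b, c, h1, h2, h3, h4, h5, h6⟩ := h (e.symm v)
      have ev : v = e (e.symm v) := (e.apply_symm_apply v).symm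
      refine ⟨e a, e b, e c, ?_, ?_, ?_, e.map_adj_iff.2 h4, e.map_adj_iff.2 h5,
        e.map_adj_iff.2 h6⟩ <;> rw [ev, e.map_adj_iff] <;> assumption
    rintro (v | v)
    · obtain ⟨a, b, c, h1, h2, h3, h4, h5, h6⟩ := hq v
      exact ⟨_, _, _, hl _ _ h1, hl _ _ h2, hl _ _ h3, hl _ _ h4, hl _ _ h5, hl _ _ h6⟩
    · have : ∀ v : Fin 4, ∃ a b c, v ≠ a ∧ v ≠ b ∧ v ≠ c ∧ a ≠ b ∧ a ≠ c ∧ b ≠ c := by decide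
      obtain ⟨a, b, c, h1, h2, h3, h4, h5, h6⟩ := this v
      exact ⟨_, _, _, hr _ _ h1, hr _ _ h2, hr _ _ h3, hr _ _ h4, hr _ _ h5, hr _ _ h6⟩
  · have hconv : ∀ {W : Type} (F : SimpleGraph W) [Fintype F.edgeSet],
        F.edgeSet.ncard = F.edgeFinset.card := by
      intro W F _
      rw [← SimpleGraph.coe_edgeFinset, Set.ncard_coe_finset]
    rw [hconv, ← e.card_edgeFinset_eq]
    have h1 : H.edgeFinset.card = (G.sum K).edgeFinset.card + 1 :=
      (G.sum K).card_edgeFinset_sup_edge (SimpleGraph.not_adj_sum_inl_inr _ _) (by simp)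
    have h2 : (G.sum K).edgeFinset.card = G.edgeFinset.card + K.edgeFinset.card := by
      rw [SimpleGraph.edgeFinset_card, SimpleGraph.edgeFinset_card, SimpleGraph.edgeFinset_card,
        Fintype.card_congr SimpleGraph.edgeSetSumEquiv, Fintype.card_sum]
    have h3 : K.edgeFinset.card = 6 := by
      have := SimpleGraph.card_edgeFinset_top_eq_card_choose_two (V := Fin 4)
      simp only [K]
      rw [show (Fintype.card (Fin 4)).choose 2 = 6 by decide] at this
      convert this
    rw [h1, h2, h3, ← hconv, hm]

lemma constr_add (k : ℕ) {n m : ℕ} (h : Constr n m) : Constr (n + 4 * k) (m + 7 * k) := by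
  induction k with
  | zero => exact h
  | succ k ih => exact constr_step ih

end Upper
/-- `p n` is the least possible size: it is attained by some connected locally
nonforesty graph of order `n`, and it is a lower bound for the sizes of all such graphs. -/
theorem stmt_13 (n : ℕ) (h8 : 8 ≤ n) :
    IsLeast {m : ℕ | ∃ G : SimpleGraph (Fin n),
        G.Connected ∧ LocallyNonforesty G ∧ G.edgeSet.ncard = m}
      (if n % 4 = 0 ∨ n % 4 = 3 then 2 * n - 1 - n / 4 else 2 * n - n / 4) := by
  constructor
  · suffices h : Constr n
        (if n % 4 = 0 ∨ n % 4 = 3 then 2 * n - 1 - n / 4 else 2 * n - n / 4) by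
      obtain ⟨G, h1, h2, h3⟩ := h
      exact ⟨G, h1, lnf_of_cliques h2, h3⟩
    obtain ⟨k, hk⟩ : ∃ k, n / 4 = k + 1 := ⟨n / 4 - 1, by omega⟩
    have h4 : n % 4 = 0 ∨ n % 4 = 1 ∨ n % 4 = 2 ∨ n % 4 = 3 := by omega
    rcases h4 with h | h | h | h
    · convert constr_add k constr4 using 1
      · omega
      · rw [if_pos (by omega)]; omega
    · convert constr_add k constr5 using 1
      · omega
      · rw [if_neg (by omega)]; omega
    · convert constr_add k constr6 using 1
      · omega
      · rw [if_neg (by omega)]; omega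
    · convert constr_add k constr7 using 1
      · omega
      · rw [if_pos (by omega)]; omega
  · rintro m ⟨G, hc, hG, rfl⟩
    have h := pot_univ hc hG
    unfold pot at h
    rw [dd_univ, Finset.card_univ, Fintype.card_fin] at h
    split_ifs <;> omega
end
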